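/- arXiv:2307.12770 — 2 statements merged into one kernel-verified Lean document; each statement's English description precedes it below -/
import Mathlib

section
/- There exists a constant C > 0 such that the following holds (Leaves procedure for PMT): for every tree T=(V,E) with n vertices, every set P of pebbles and set H of holes with |H| ≥ c(T), and all valid initial and final configurations Aˢ and Aᵗ, there exists a plan f with |f| ≤ C·(|P|·n·c(T) + n²) such that ρ(Aˢ,f)(p) = Aᵗ(p) for every pebble p ∈ P; i.e., the pebble motion problem on trees is solvable with O(k·n·c + n²) moves, where k = |P|. -/
/-!
Only the placement of the pebbles matters, since holes are interchangeable; moves between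
injective placements are reversible (`PMT.Reach.symm`). So it is enough to bring both
configurations to a common one.

Put `m = c(T) + 1`, with `T` not a path graph. There are at least `m - 1` holes, so `m - 1` of them
can be gathered around any pebble `p` into a cluster: a connected set of `m` vertices that holds
`p` and no other pebble (`PMT.exists_cluster`). The cluster then crawls through the tree
(`PMT.Cluster.crawl_step`): to take in an adjacent vertex `b` it gives up a leaf `a`, and the
pebble at `b`, if there is one, passes through the cluster to `a` while `p` waits off its way
(`PMT.Cluster.exchange`). This fails only if the path from `b` to `a` covers the whole cluster.
That path has length `m`, and the choice of `m` guarantees a junction on it at distance at least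
two from both of its ends (`PMT.Good`, `PMT.good_of_lt`): otherwise its interior would give a
corridor longer than `c₁` or `c₂` allows. A third neighbour of the junction supplies the parking
place for `p`. One step of the crawl costs `O(m)` moves, so any pebble is delivered to any vertex
with `O(m n)` moves (`PMT.deliver`).

The pebbles are then fixed one by one (`PMT.solve`). Let `l` be an end of a longest path of the
tree. Some pebble is delivered to `l` from the initial and from the final placement, and `l` is
removed together with that pebble. The number of holes is unchanged and the property `PMT.Good` is
inherited by the pruned tree (`PMT.exists_prune`), although the corridors of the pruned tree may be
longer. The total is `O(|P| m n)` moves.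

For a path graph `c(T) = n - 1`, so there is at most one pebble and it walks to its target.
-/

namespace PMT

variable {V P H : Type}

/-- A configuration assigns to each pebble or hole a vertex, bijectively. -/
abbrev Config (P H V : Type) : Type := (P ⊕ H) ≃ V

/- Apply a single move `u → v`: applicable iff `(u,v)` is an edge and the occupant of `v`
is a hole; applying it swaps the occupants of `u` and `v`. -/
open Classical in
noncomputable def applyMove (G : SimpleGraph V) (A : Config P H V) (m : V × V) :
    Option (Config P H V) :=
  if G.Adj m.1 m.2 ∧ (A.symm m.2).isRight = true then
    some (A.trans (Equiv.swap m.1 m.2))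
  else
    none

/-- Apply a plan (finite list of moves) in order; defined (`some`) only when each
successive move is applicable. -/
noncomputable def applyPlan (G : SimpleGraph V) :
    Config P H V → List (V × V) → Option (Config P H V)
  | A, [] => some A
  | A, m :: f => (applyMove G A m).bind fun B => applyPlan G B f

/-- The degree of a vertex (number of neighbors). -/
noncomputable def deg (G : SimpleGraph V) (v : V) : ℕ := (G.neighborSet v).ncard

/-- A corridor: a (nontrivial) path whose endpoints have degree different from 2 and
whose internal vertices all have degree exactly 2. -/
def IsCorridor (G : SimpleGraph V) {a b : V} (p : G.Walk a b) : Prop :=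
  p.IsPath ∧ 1 ≤ p.length ∧ deg G a ≠ 2 ∧ deg G b ≠ 2 ∧
    ∀ x ∈ p.support, x ≠ a → x ≠ b → deg G x = 2

/-- `c₁(T)`: the maximum length of a corridor. -/
noncomputable def c1 (G : SimpleGraph V) : ℕ :=
  sSup {n | ∃ (a b : V) (p : G.Walk a b), IsCorridor G p ∧ p.length = n}

/-- `c₂(T)`: the maximum length of a corridor both of whose endpoints are junctions
(vertices of degree greater than 2); `0` if no such corridor exists. -/
noncomputable def c2 (G : SimpleGraph V) : ℕ :=
  sSup {n | ∃ (a b : V) (p : G.Walk a b),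
    IsCorridor G p ∧ 2 < deg G a ∧ 2 < deg G b ∧ p.length = n}

/-- A path graph: all vertices lie on a single path. -/
def IsPathGraph (G : SimpleGraph V) : Prop :=
  ∃ (a b : V) (p : G.Walk a b), p.IsPath ∧ ∀ x : V, x ∈ p.support

/- The constant `c(T)`: `c₁(T)` if `T` is a path graph,
`max (c₁(T)+1) (c₂(T)+2)` otherwise. -/
open Classical in
noncomputable def cT (G : SimpleGraph V) : ℕ :=
  if IsPathGraph G then c1 G else max (c1 G + 1) (c2 G + 2)

end PMT

namespace PMT

variable {V P H : Type}

/-! ### Pebble placements -/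

/-- `Reach G N s t`: from the pebble placement `s` the placement `t` can be reached by at most `N`
moves, each taking one pebble along an edge to an unoccupied vertex. The holes are not labelled:
they are the vertices outside the range of the placement. -/
inductive Reach (G : SimpleGraph V) : ℕ → (P → V) → (P → V) → Prop
  | refl (N : ℕ) (s : P → V) : Reach G N s s
  | step {N : ℕ} {s s' t : P → V} (q : P) (hadj : G.Adj (s q) (s' q)) (hfree : ∀ r, s r ≠ s' q)
      (hrest : ∀ r, r ≠ q → s' r = s r) (h : Reach G N s' t) : Reach G (N + 1) s t

namespace Reach

variable {G : SimpleGraph V}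

lemma mono {N M : ℕ} {s t : P → V} (h : Reach G N s t) (hNM : N ≤ M) : Reach G M s t := by
  induction h generalizing M with
  | refl N s => exact .refl _ _
  | step q h1 h2 h3 _ ih =>
    obtain ⟨M, rfl⟩ : ∃ M', M = M' + 1 := ⟨M - 1, by omega⟩
    exact .step q h1 h2 h3 (ih (by omega))

lemma trans {N M : ℕ} {s t u : P → V} (h : Reach G N s t) (h' : Reach G M t u) :
    Reach G (N + M) s u := by
  induction h with
  | refl N s => exact h'.mono (by omega)
  | step q h1 h2 h3 _ ih => exact (Reach.step q h1 h2 h3 (ih h')).mono (by omega)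

lemma injective_step {s s' : P → V} (hs : Function.Injective s) (q : P)
    (hfree : ∀ r, s r ≠ s' q) (hrest : ∀ r, r ≠ q → s' r = s r) : Function.Injective s' := by
  intro a b hab
  by_cases ha : a = q <;> by_cases hb : b = q
  · rw [ha, hb]
  · subst ha; rw [hrest b hb] at hab; exact absurd hab.symm (hfree b)
  · subst hb; rw [hrest a ha] at hab; exact absurd hab (hfree a)
  · rw [hrest a ha, hrest b hb] at hab; exact hs hab

lemma injective {N : ℕ} {s t : P → V} (h : Reach G N s t) (hs : Function.Injective s) :
    Function.Injective t := by
  induction h with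
  | refl N s => exact hs
  | step q h1 h2 h3 _ ih => exact ih (injective_step hs q h2 h3)

lemma symm {N : ℕ} {s t : P → V} (h : Reach G N s t) (hs : Function.Injective s) :
    Reach G N t s := by
  induction h with
  | refl N s => exact .refl _ _
  | @step N s s' t q h1 h2 h3 _ ih =>
    refine (ih (injective_step hs q h2 h3)).trans (M := 1) ?_
    refine .step q h1.symm ?_ (fun r hr => (h3 r hr).symm) (.refl 0 s)
    intro r hr
    by_cases hq : r = q
    · subst hq; exact h2 r hr.symm
    · rw [h3 r hq] at hr; exact hq (hs hr)

/-- Plans on labelled configurations realise the moves between placements. -/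
lemma exists_plan {N : ℕ} {s t : P → V} (h : Reach G N s t) (A : Config P H V)
    (hA : ∀ p, A (Sum.inl p) = s p) :
    ∃ (f : List (V × V)) (B : Config P H V), applyPlan G A f = some B ∧ f.length ≤ N ∧
      ∀ p, B (Sum.inl p) = t p := by
  classical
  induction h generalizing A with
  | refl N s => exact ⟨[], A, rfl, by simp, hA⟩
  | @step N s s' t q h1 h2 h3 _ ih =>
    have hr : (A.symm (s' q)).isRight = true := by
      rcases hx : A.symm (s' q) with p | x
      · have := (A.symm_apply_eq).1 hx
        rw [hA] at this
        exact absurd this.symm (h2 p)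
      · rfl
    have hm : applyMove G A (s q, s' q) = some (A.trans (Equiv.swap (s q) (s' q))) := by
      unfold applyMove
      rw [if_pos ⟨h1, hr⟩]
    obtain ⟨f, B, hf, hl, hB⟩ := ih (A.trans (Equiv.swap (s q) (s' q))) (by
      intro p
      rw [Equiv.trans_apply, hA]
      by_cases hp : p = q
      · subst hp; simp
      · rw [h3 p hp]
        apply Equiv.swap_apply_of_ne_of_ne _ (h2 p)
        intro hsp
        exact hp (Sum.inl_injective (A.injective ((hA p).trans (hsp.trans (hA q).symm)))))
    exact ⟨(s q, s' q) :: f, B, by simp [applyPlan, hm, hf], by simpa using hl, hB⟩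

/-- A pebble travels along a walk that meets no other pebble. -/
lemma walk {q : P} {u v : V} (w : G.Walk u v) :
    ∀ s : P → V, s q = u → (∀ r, r ≠ q → s r ∉ w.support) →
      ∃ t, Reach G w.length s t ∧ t q = v ∧ ∀ r, r ≠ q → t r = s r := by
  classical
  induction w with
  | nil => exact fun s hs _ => ⟨s, .refl _ _, hs, fun _ _ => rfl⟩
  | @cons u u' v h w ih =>
    intro s hs hfree
    obtain ⟨t, h1, h2, h3⟩ := ih (Function.update s q u') (by simp) (by
      intro r hr
      rw [Function.update_of_ne hr]
      exact fun hm => hfree r hr (by simp [hm]))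
    refine ⟨t, ?_, h2, fun r hr => by rw [h3 r hr, Function.update_of_ne hr]⟩
    refine .step q (s' := Function.update s q u') (by simpa [hs] using h) ?_
      (fun r hr => by rw [Function.update_of_ne hr]) h1
    intro r
    rw [Function.update_self]
    by_cases hr : r = q
    · subst hr; rw [hs]; exact h.ne
    · exact fun he => hfree r hr (by simp [he])

/-- A vertex `u` is emptied by shifting the pebbles of a path from `u` to a hole one step
towards that hole. -/
lemma shift {u v : V} (w : G.Walk u v) (hw : w.IsPath) :
    ∀ s : P → V, Function.Injective s → (∀ r, s r ≠ v) →
      ∃ t, Reach G w.length s t ∧ (∀ r, t r ≠ u) ∧ (∀ r, s r ∉ w.support → t r = s r) ∧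
        ∀ r, s r ∈ w.support → t r ∈ w.support := by
  induction w with
  | nil => exact fun s _ hs => ⟨s, .refl _ _, hs, fun _ _ => rfl, fun _ h => h⟩
  | @cons u u' v h w ih =>
    intro s hinj hs
    rw [SimpleGraph.Walk.cons_isPath_iff] at hw
    obtain ⟨t, h1, h2, h3, h4⟩ := ih hw.1 s hinj hs
    have hsup : ∀ r, t r = u → s r = u := by
      intro r hr
      by_cases hm : s r ∈ w.support
      · exact absurd (hr ▸ h4 r hm) hw.2
      · rw [← h3 r hm, hr]
    have hstay : ∀ r, s r ∉ (SimpleGraph.Walk.cons h w).support → t r = s r := fun r hr =>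
      h3 r fun hm => hr (by simp [hm])
    have hin : ∀ r, s r ∈ (SimpleGraph.Walk.cons h w).support →
        t r ∈ (SimpleGraph.Walk.cons h w).support := by
      intro r hr
      by_cases hm : s r ∈ w.support
      · simp [h4 r hm]
      · rw [h3 r hm]; exact hr
    by_cases hq : ∃ q, t q = u
    · obtain ⟨q, hq⟩ := hq
      classical
      refine ⟨Function.update t q u', ?_, ?_, ?_, ?_⟩
      · refine h1.trans (M := 1) (.step q (by simpa [hq] using h) ?_ ?_ (.refl 0 _))
        · simpa using h2
        · intro r hr; rw [Function.update_of_ne hr]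
      · intro r
        by_cases hr : r = q
        · subst hr; rw [Function.update_self]; exact h.ne'
        · rw [Function.update_of_ne hr]; exact fun hr' => hr (h1.injective hinj (hr'.trans hq.symm))
      · intro r hr
        have : r ≠ q := by rintro rfl; exact hr (by simp [hsup r hq])
        rw [Function.update_of_ne this]; exact hstay r hr
      · intro r hr
        by_cases hrq : r = q
        · subst hrq; simp
        · rw [Function.update_of_ne hrq]; exact hin r hr
    · exact ⟨t, h1.mono (by simp), fun r hr => hq ⟨r, hr⟩, hstay, hin⟩

end Reach
end PMT

namespace PMT

open SimpleGraph

variable {V P H : Type} {G : SimpleGraph V}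

/-! ### Paths in trees -/

/-- A path of an acyclic graph has no chords. -/
lemma chord (hG : G.IsAcyclic) {u v : V} {w : G.Walk u v} (hw : w.IsPath) {i j : ℕ}
    (hi : i ≤ w.length) (hj : j ≤ w.length) (h : G.Adj (w.getVert i) (w.getVert j)) :
    j = i + 1 ∨ i = j + 1 := by
  wlog hij : i ≤ j generalizing i j
  · exact (this hj hi h.symm (by omega)).symm
  left
  have hne : i ≠ j := by rintro rfl; exact h.ne rfl
  have hmem : w.getVert j ∈ (w.drop i).support := by
    rw [Walk.mem_support_iff_exists_getVert]
    exact ⟨j - i, by rw [Walk.drop_getVert]; congr 1; omega, by rw [Walk.drop_length]; omega⟩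
  have := hG.eq_snd_of_adj_start (hw.drop i) h hmem
  rw [Walk.snd, Walk.drop_getVert] at this
  exact hw.getVert_injOn (by simpa using hj) (by simp; omega) this

/-- The part of a path between two positions. -/
lemma segment_path {u v : V} {w : G.Walk u v} (hw : w.IsPath) {i j : ℕ} (hij : i ≤ j)
    (hj : j ≤ w.length) :
    ∃ (a b : V) (r : G.Walk a b), r.IsPath ∧ r.length = j - i ∧
      ∀ t ≤ j - i, r.getVert t = w.getVert (i + t) := by
  refine ⟨_, _, (w.drop i).take (j - i), (hw.drop i).take _, ?_, ?_⟩
  · rw [Walk.take_length, Walk.drop_length]; omega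
  · intro t ht
    rw [Walk.take_getVert, Walk.drop_getVert, min_eq_right ht]

lemma exists_path_of_walk {u v : V} (w : G.Walk u v) :
    ∃ w' : G.Walk u v, w'.IsPath ∧ ∀ x ∈ w'.support, x ∈ w.support := by
  classical
  exact ⟨w.bypass, w.bypass_isPath, fun x hx => w.support_bypass_subset_support hx⟩

lemma length_lt_card {u v : V} {w : G.Walk u v} (hw : w.IsPath) {K : Finset V}
    (hK : ∀ x ∈ w.support, x ∈ K) : w.length < K.card := by
  classical
  have h1 : w.support.toFinset ⊆ K := fun x hx => hK x (by simpa using hx)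
  have h2 := Finset.card_le_card h1
  rw [List.toFinset_card_of_nodup hw.support_nodup, Walk.length_support] at h2
  omega

lemma exists_third [Finite V] {v x y : V} (h : 3 ≤ deg G v) :
    ∃ z, G.Adj v z ∧ z ≠ x ∧ z ≠ y := by
  have h2 : ({x, y} : Set V).ncard < (G.neighborSet v).ncard :=
    lt_of_le_of_lt ((Set.ncard_insert_le x {y}).trans (by rw [Set.ncard_singleton])) h
  obtain ⟨z, hz, hz'⟩ := Set.exists_mem_notMem_of_ncard_lt_ncard h2
  simp only [Set.mem_insert_iff, Set.mem_singleton_iff, not_or] at hz'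
  exact ⟨z, hz, hz'⟩

/-! ### Connected vertex sets -/

/-- The vertex set `K` is connected: any two of its vertices are joined by a walk inside `K`. -/
def Conn (G : SimpleGraph V) (K : Finset V) : Prop :=
  ∀ u ∈ K, ∀ v ∈ K, ∃ w : G.Walk u v, ∀ x ∈ w.support, x ∈ K

lemma conn_of_star {K : Finset V} {y : V}
    (h : ∀ v ∈ K, ∃ w : G.Walk y v, ∀ x ∈ w.support, x ∈ K) : Conn G K := by
  intro u hu v hv
  obtain ⟨w, hw⟩ := h u hu
  obtain ⟨w', hw'⟩ := h v hv
  refine ⟨w.reverse.append w', fun x hx => ?_⟩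
  rw [Walk.mem_support_append_iff] at hx
  rcases hx with hx | hx
  · exact hw x (by simpa using hx)
  · exact hw' x hx

lemma Conn.exists_path {K : Finset V} (hK : Conn G K) {u v : V} (hu : u ∈ K) (hv : v ∈ K) :
    ∃ w : G.Walk u v, w.IsPath ∧ ∀ x ∈ w.support, x ∈ K := by
  obtain ⟨w, hw⟩ := hK u hu v hv
  obtain ⟨w', h1, h2⟩ := exists_path_of_walk w
  exact ⟨w', h1, fun x hx => hw x (h2 x hx)⟩

lemma Conn.insert [DecidableEq V] {K : Finset V} (hK : Conn G K) {y b : V} (hy : y ∈ K)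
    (h : G.Adj y b) : Conn G (insert b K) := by
  refine conn_of_star (y := y) fun v hv => ?_
  rcases Finset.mem_insert.1 hv with rfl | hv
  · refine ⟨Walk.cons h Walk.nil, fun x hx => ?_⟩
    simp only [Walk.support_cons, Walk.support_nil, List.mem_cons, List.not_mem_nil,
      or_false] at hx
    rcases hx with rfl | rfl <;> simp [hy]
  · obtain ⟨w, hw⟩ := hK y hy v hv
    exact ⟨w, fun x hx => Finset.mem_insert_of_mem (hw x hx)⟩

lemma conn_segment [DecidableEq V] {u v : V} (w : G.Walk u v) {i j : ℕ} :
    Conn G ((Finset.Icc i j).image w.getVert) := by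
  refine conn_of_star (y := w.getVert i) fun z hz => ?_
  obtain ⟨t, ht, rfl⟩ := Finset.mem_image.1 hz
  rw [Finset.mem_Icc] at ht
  refine ⟨((w.drop i).take (t - i)).copy rfl
    (by rw [Walk.drop_getVert]; congr 1; omega), fun x hx => ?_⟩
  rw [Walk.support_copy, Walk.mem_support_iff_exists_getVert] at hx
  obtain ⟨n, rfl, hn⟩ := hx
  rw [Walk.take_length, Walk.drop_length] at hn
  rw [Walk.take_getVert, Walk.drop_getVert]
  exact Finset.mem_image.2 ⟨_, Finset.mem_Icc.2 ⟨by omega, by omega⟩, rfl⟩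

/-- A connected set of at least two vertices of a tree stays connected after the removal of a
vertex farthest from a given vertex `y`. -/
lemma Conn.exists_erase [DecidableEq V] (hG : G.IsAcyclic) {K : Finset V} (hK : Conn G K) {y : V}
    (hy : y ∈ K) (h2 : 2 ≤ K.card) : ∃ a ∈ K, a ≠ y ∧ Conn G (K.erase a) := by
  have hex : ∀ v, ∃ n : ℕ, v ∈ K → ∃ w : G.Walk y v, w.IsPath ∧ (∀ x ∈ w.support, x ∈ K) ∧
      w.length = n := by
    intro v
    by_cases hv : v ∈ K
    · obtain ⟨w, h1, h2⟩ := hK.exists_path hy hv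
      exact ⟨w.length, fun _ => ⟨w, h1, h2, rfl⟩⟩
    · exact ⟨0, fun h => absurd h hv⟩
  choose f hf using hex
  obtain ⟨a, ha, hmax⟩ := Finset.exists_max_image K f ⟨y, hy⟩
  refine ⟨a, ha, ?_, ?_⟩
  · rintro rfl
    obtain ⟨v, hv, hne⟩ := Finset.exists_mem_ne (by omega : 1 < K.card) a
    obtain ⟨w, hw, _, hl⟩ := hf a ha
    obtain ⟨w', hw', _, hl'⟩ := hf v hv
    have := hmax v hv
    rw [← hl, ← hl', Walk.length_eq_zero_iff.2 (Walk.isPath_iff_nil.1 hw), Nat.le_zero] at this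
    exact hne (Walk.eq_of_length_eq_zero this).symm
  · refine conn_of_star (y := y) fun v hv => ?_
    obtain ⟨hva, hvK⟩ := Finset.mem_erase.1 hv
    obtain ⟨w, hw, hs, hl⟩ := hf v hvK
    refine ⟨w, fun x hx => Finset.mem_erase.2 ⟨?_, hs x hx⟩⟩
    rintro rfl
    obtain ⟨w', hw', _, hl'⟩ := hf x ha
    -- a path to `v` through the farthest vertex would be longer than the path to that vertex
    have huniq : w' = w.takeUntil x hx :=
      congrArg Subtype.val ((hG.subsingleton_path y x).elim ⟨w', hw'⟩ ⟨_, hw.takeUntil hx⟩)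
    have h1 := hmax v hvK
    have h2 := Walk.length_takeUntil_lt_length hx hva.symm
    rw [← huniq] at h2
    omega

/-- A walk that enters `K` has an initial part outside `K` followed by an edge into `K`. -/
lemma exists_entry {K : Finset V} {h y : V} (w : G.Walk h y) (hh : h ∉ K) (hy : y ∈ K) :
    ∃ u z, u ∉ K ∧ z ∈ K ∧ G.Adj z u ∧ ∃ w' : G.Walk h u, ∀ x ∈ w'.support, x ∉ K := by
  induction w with
  | nil => exact absurd hy hh
  | @cons h h' y hadj w ih =>
    by_cases hK : h' ∈ K
    · exact ⟨h, h', hh, hK, hadj.symm, Walk.nil, by simpa using hh⟩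
    · obtain ⟨u, z, h1, h2, h3, w', h4⟩ := ih hK hy
      exact ⟨u, z, h1, h2, h3, Walk.cons hadj w', by
        intro x hx
        rw [Walk.support_cons, List.mem_cons] at hx
        rcases hx with rfl | hx
        · exact hh
        · exact h4 x hx⟩

end PMT

namespace PMT

open SimpleGraph

variable {V P H : Type} {G : SimpleGraph V}

/-! ### Crawling clusters -/

/-- Every path of length `m` passes through a junction that is at distance at least two from both
ends of the path. -/
def Good (G : SimpleGraph V) (m : ℕ) : Prop :=
  ∀ ⦃u v : V⦄ (w : G.Walk u v), w.IsPath → w.length = m →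
    ∃ i, 2 ≤ i ∧ i + 2 ≤ m ∧ 3 ≤ deg G (w.getVert i)

/-- `K` is a connected set of `m` vertices that holds the pebble `p` and no other pebble. -/
structure Cluster (G : SimpleGraph V) (m : ℕ) (K : Finset V) (s : P → V) (p : P) : Prop where
  conn : Conn G K
  card : K.card = m
  mem : s p ∈ K
  free : ∀ r, r ≠ p → s r ∉ K

/-- Inside its cluster the pebble can go anywhere. -/
lemma Cluster.goto {m : ℕ} {K : Finset V} {s : P → V} {p : P} (h : Cluster G m K s p) {x : V}
    (hx : x ∈ K) : ∃ t, Reach G m s t ∧ t p = x ∧ ∀ r, r ≠ p → t r = s r := by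
  obtain ⟨w, hw, hs⟩ := h.conn.exists_path h.mem hx
  obtain ⟨t, h1, h2⟩ := Reach.walk w s rfl fun r hr hm => h.free r hr (hs _ hm)
  have := length_lt_card hw hs
  exact ⟨t, h1.mono (by have := h.card; omega), h2⟩

variable [DecidableEq V]

/-- A cluster gives up the vertex `a` and takes the vertex `b` if some vertex `x` of the cluster is
avoided by a walk from `b` to `a`: the pebble `p` waits at `x` while the pebble at `b`, if any,
travels to `a`. -/
lemma Cluster.exchange {m : ℕ} {K : Finset V} {s : P → V} {p : P} (h : Cluster G m K s p)
    (hinj : Function.Injective s) {a b x : V} (ha : a ∈ K) (hb : b ∉ K) (hx : x ∈ K)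
    (w : G.Walk b a) (hw : ∀ z ∈ w.support, z ∈ insert b K) (hwx : x ∉ w.support)
    (hconn : Conn G (insert b (K.erase a))) :
    ∃ t, Reach G (2 * m) s t ∧ Cluster G m (insert b (K.erase a)) t p := by
  obtain ⟨t, h1, h2, h3⟩ := h.goto hx
  have hxa : x ≠ a := by rintro rfl; exact hwx (by simp)
  have hxb : x ≠ b := by rintro rfl; exact hwx (by simp)
  have hab : a ≠ b := by rintro rfl; exact hb ha
  have hcard : (insert b (K.erase a)).card = m := by
    have hm := Finset.card_pos.2 ⟨a, ha⟩
    rw [Finset.card_insert_of_notMem (by simp [hb]), Finset.card_erase_of_mem ha, ← h.card]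
    omega
  have hxK : x ∈ insert b (K.erase a) := by simp [hxa, hx]
  have htK : ∀ r, r ≠ p → t r ∉ K := fun r hr => by rw [h3 r hr]; exact h.free r hr
  by_cases hq : ∃ q, t q = b
  · obtain ⟨q, hq⟩ := hq
    obtain ⟨w', hw', hs⟩ := exists_path_of_walk w
    have htinj := h1.injective hinj
    have hqp : q ≠ p := by rintro rfl; exact hxb (h2.symm.trans hq)
    obtain ⟨t', h1', h2', h3'⟩ := Reach.walk w' t hq (by
      intro r hr hm
      have hm' := hs _ hm
      by_cases hrp : r = p
      · subst hrp; exact hwx (h2 ▸ hm')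
      · rcases Finset.mem_insert.1 (hw _ hm') with he | he
        · exact hr (htinj (he.trans hq.symm))
        · exact htK r hrp he)
    have hl := length_lt_card hw' (fun z hz => hw z (hs z hz))
    rw [Finset.card_insert_of_notMem hb, h.card] at hl
    refine ⟨t', (h1.trans h1').mono (by omega), hconn, hcard, ?_, ?_⟩
    · rw [h3' p hqp.symm, h2]; exact hxK
    · intro r hr hm
      by_cases hrq : r = q
      · subst hrq
        rw [h2'] at hm
        simp [hab] at hm
      · rw [h3' r hrq] at hm
        rcases Finset.mem_insert.1 hm with he | he
        · exact hrq (htinj (he.trans hq.symm))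
        · exact htK r hr (Finset.mem_of_mem_erase he)
  · refine ⟨t, h1.mono (by omega), hconn, hcard, by rw [h2]; exact hxK, ?_⟩
    intro r hr hm
    rcases Finset.mem_insert.1 hm with he | he
    · exact hq ⟨r, he⟩
    · exact htK r hr (Finset.mem_of_mem_erase he)

/-- A cluster `K` crawls onto an adjacent vertex `b`. A cluster vertex `a` is exchanged for `b`
unless the path from `b` to `a` covers `K`. In that case `K` is a path; a neighbour `b'` of the
junction provided by `Good` is first exchanged for the end `a`, and then `b` is exchanged for the
new end of the path while the pebble waits at `b'`. -/
lemma Cluster.crawl_step [Finite V] (hG : G.IsAcyclic) {m : ℕ} (hm : 2 ≤ m) (hgood : Good G m)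
    {K : Finset V} {s : P → V} {p : P} (h : Cluster G m K s p) (hinj : Function.Injective s)
    {y b : V} (hy : y ∈ K) (hb : b ∉ K) (hadj : G.Adj y b) :
    ∃ K' t, Reach G (4 * m) s t ∧ Cluster G m K' t p ∧ b ∈ K' := by
  obtain ⟨a, ha, hay, hconn⟩ := h.conn.exists_erase hG hy (by rw [h.card]; exact hm)
  obtain ⟨r, hr, hrK⟩ := h.conn.exists_path hy ha
  have hconn' : Conn G (insert b (K.erase a)) :=
    hconn.insert (Finset.mem_erase.2 ⟨hay.symm, hy⟩) hadj
  set w : G.Walk b a := Walk.cons hadj.symm r with hwdef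
  have hwp : w.IsPath := by
    rw [hwdef, Walk.cons_isPath_iff]
    exact ⟨hr, fun hm => hb (hrK b hm)⟩
  have hwK : ∀ z ∈ w.support, z ∈ insert b K := by
    intro z hz
    rw [hwdef, Walk.support_cons, List.mem_cons] at hz
    rcases hz with rfl | hz
    · simp
    · exact Finset.mem_insert_of_mem (hrK z hz)
  by_cases hx : ∃ x ∈ K, x ∉ w.support
  · obtain ⟨x, hx, hxw⟩ := hx
    obtain ⟨t, h1, h2⟩ := h.exchange hinj ha hb hx w hwK hxw hconn'
    exact ⟨_, t, h1.mono (by omega), h2, by simp⟩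
  push Not at hx
  -- from here on `K` consists of the vertices at positions `1, …, m` of the path `w`
  have hins : insert b K = w.support.toFinset := by
    ext z
    rw [List.mem_toFinset]
    refine ⟨fun hz => ?_, hwK z⟩
    rcases Finset.mem_insert.1 hz with rfl | hz
    · simp
    · exact hx z hz
  have hlen : w.length = m := by
    have := congrArg Finset.card hins
    rw [List.toFinset_card_of_nodup hwp.support_nodup, Walk.length_support,
      Finset.card_insert_of_notMem hb, h.card] at this
    omega
  have hw0 : w.getVert 0 = b := w.getVert_zero
  have hwm : w.getVert m = a := by rw [← hlen]; exact w.getVert_length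
  have hwinj : ∀ i j, i ≤ m → j ≤ m → w.getVert i = w.getVert j → i = j := fun i j hi hj he =>
    hwp.getVert_injOn (by simpa [hlen] using hi) (by simpa [hlen] using hj) he
  have hmemK : ∀ i, 1 ≤ i → i ≤ m → w.getVert i ∈ K := by
    intro i h1 h2
    rcases Finset.mem_insert.1 (hwK _ (w.getVert_mem_support i)) with he | he
    · have := hwinj i 0 h2 (by omega) (he.trans hw0.symm); omega
    · exact he
  have hKmem : ∀ z ∈ K, ∃ i, 1 ≤ i ∧ i ≤ m ∧ w.getVert i = z := by
    intro z hz
    obtain ⟨i, h1, h2⟩ := Walk.mem_support_iff_exists_getVert.1 (hx z hz)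
    refine ⟨i, ?_, by omega, h1⟩
    rcases Nat.eq_zero_or_pos i with rfl | h0
    · exact absurd (hw0.symm.trans h1 ▸ hz) hb
    · exact h0
  obtain ⟨i, hi2, him, hdeg⟩ := hgood w hwp hlen
  obtain ⟨b', hb'adj, hb'1, hb'2⟩ := exists_third (x := w.getVert (i - 1))
    (y := w.getVert (i + 1)) hdeg
  have hb'w : b' ∉ w.support := by
    intro hmem
    obtain ⟨j, rfl, hj⟩ := Walk.mem_support_iff_exists_getVert.1 hmem
    rcases chord hG hwp (by omega) hj hb'adj with rfl | rfl
    · exact hb'2 rfl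
    · exact hb'1 (by simp)
  have hb'K : b' ∉ K := fun hm => hb'w (hx b' hm)
  have hb'b : b' ≠ b := by rintro rfl; exact hb'w (by simp)
  have hKa : K.erase a = (Finset.Icc 1 (m - 1)).image w.getVert := by
    ext z
    simp only [Finset.mem_erase, Finset.mem_image, Finset.mem_Icc]
    constructor
    · rintro ⟨hza, hz⟩
      obtain ⟨j, h1, h2, rfl⟩ := hKmem z hz
      have : j ≠ m := by rintro rfl; exact hza hwm
      exact ⟨j, ⟨h1, by omega⟩, rfl⟩
    · rintro ⟨j, ⟨h1, h2⟩, rfl⟩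
      refine ⟨fun he => ?_, hmemK j h1 (by omega)⟩
      have := hwinj j m (by omega) le_rfl (he.trans hwm.symm)
      omega
  -- exchange `a` for `b'` through the junction, while the pebble waits at position `1 < i`
  obtain ⟨t, ht1, ht2⟩ := h.exchange hinj ha hb'K (hmemK 1 le_rfl (by omega))
    (Walk.cons hb'adj.symm (w.drop i)) (by
      intro z hz
      rw [Walk.support_cons, List.mem_cons] at hz
      rcases hz with rfl | hz
      · simp
      · obtain ⟨j, rfl, hj⟩ := Walk.mem_support_iff_exists_getVert.1 hz
        rw [Walk.drop_length] at hj
        rw [Walk.drop_getVert]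
        exact Finset.mem_insert_of_mem (hmemK _ (by omega) (by omega))) (by
      intro hz
      rw [Walk.support_cons, List.mem_cons] at hz
      rcases hz with hz | hz
      · exact hb'K (hz ▸ hmemK 1 le_rfl (by omega))
      · obtain ⟨j, he, hj⟩ := Walk.mem_support_iff_exists_getVert.1 hz
        rw [Walk.drop_length] at hj
        rw [Walk.drop_getVert] at he
        have := hwinj _ _ (by omega) (by omega) he
        omega) (by
      rw [hKa]
      exact (conn_segment w).insert (Finset.mem_image.2
        ⟨i, Finset.mem_Icc.2 ⟨by omega, by omega⟩, rfl⟩) hb'adj)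
  have ha' : w.getVert (m - 1) ∈ insert b' (K.erase a) := by
    rw [hKa]
    exact Finset.mem_insert_of_mem
      (Finset.mem_image.2 ⟨m - 1, Finset.mem_Icc.2 ⟨by omega, le_rfl⟩, rfl⟩)
  have hset : insert b ((insert b' (K.erase a)).erase (w.getVert (m - 1))) =
      insert b' ((Finset.Icc 0 (m - 2)).image w.getVert) := by
    rw [hKa]
    ext z
    simp only [Finset.mem_insert, Finset.mem_erase, Finset.mem_image, Finset.mem_Icc]
    constructor
    · rintro (rfl | ⟨hz1, rfl | ⟨j, ⟨h1, h2⟩, rfl⟩⟩)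
      · exact Or.inr ⟨0, ⟨le_rfl, by omega⟩, hw0⟩
      · exact Or.inl rfl
      · have : j ≠ m - 1 := by rintro rfl; exact hz1 rfl
        exact Or.inr ⟨j, ⟨by omega, by omega⟩, rfl⟩
    · rintro (rfl | ⟨j, ⟨h1, h2⟩, rfl⟩)
      · exact Or.inr ⟨fun he => hb'w (he ▸ w.getVert_mem_support _), Or.inl rfl⟩
      · rcases Nat.eq_zero_or_pos j with rfl | h0
        · exact Or.inl hw0
        · refine Or.inr ⟨fun he => ?_, Or.inr ⟨j, ⟨h0, by omega⟩, rfl⟩⟩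
          have := hwinj _ _ (by omega) (by omega) he
          omega
  -- exchange position `m - 1` for `b`; the junction at `i ≤ m - 2` keeps `b'` attached
  obtain ⟨t', ht1', ht2'⟩ := ht2.exchange (ht1.injective hinj) ha' (b := b) (x := b')
    (by simp [hb'b.symm, hb]) (by simp) ((w.take (m - 1)).copy rfl rfl) (by
      intro z hz
      rw [Walk.support_copy] at hz
      obtain ⟨j, rfl, hj⟩ := Walk.mem_support_iff_exists_getVert.1 hz
      rw [Walk.take_length] at hj
      rw [Walk.take_getVert, min_eq_right (by omega), hKa]
      rcases Nat.eq_zero_or_pos j with rfl | h0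
      · rw [hw0]; simp
      · exact Finset.mem_insert_of_mem (Finset.mem_insert_of_mem
          (Finset.mem_image.2 ⟨j, Finset.mem_Icc.2 ⟨h0, by omega⟩, rfl⟩))) (by
      intro hz
      rw [Walk.support_copy] at hz
      obtain ⟨j, he, hj⟩ := Walk.mem_support_iff_exists_getVert.1 hz
      rw [Walk.take_getVert] at he
      exact hb'w (he ▸ w.getVert_mem_support _)) (by
      rw [hset]
      exact (conn_segment w).insert (Finset.mem_image.2
        ⟨i, Finset.mem_Icc.2 ⟨by omega, by omega⟩, rfl⟩) hb'adj)
  exact ⟨_, t', (ht1.trans ht1').mono (by omega), ht2', by simp⟩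

/-- A pebble with a cluster around it can be brought to the end of any walk that starts in the
cluster. -/
lemma Cluster.crawl [Finite V] (hG : G.IsAcyclic) {m : ℕ} (hm : 2 ≤ m) (hgood : Good G m)
    {p : P} {y l : V} (w : G.Walk y l) :
    ∀ (K : Finset V) (s : P → V), Cluster G m K s p → Function.Injective s → y ∈ K →
      ∃ t, Reach G (4 * m * w.length + m) s t ∧ t p = l := by
  induction w with
  | nil =>
    intro K s h hinj hy
    obtain ⟨t, h1, h2, _⟩ := h.goto hy
    exact ⟨t, h1.mono (by omega), h2⟩
  | @cons y b l hadj w ih =>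
    intro K s h hinj hy
    rw [Walk.length_cons]
    by_cases hb : b ∈ K
    · obtain ⟨t, h1, h2⟩ := ih K s h hinj hb
      exact ⟨t, h1.mono (by nlinarith), h2⟩
    · obtain ⟨K', s', h1, h2, h3⟩ := h.crawl_step hG hm hgood hinj hy hb hadj
      obtain ⟨t, h4, h5⟩ := ih K' s' h2 (h1.injective hinj) h3
      exact ⟨t, (h1.trans h4).mono (by nlinarith), h5⟩

/-- Holes are gathered one at a time into a cluster around a given pebble. -/
lemma exists_cluster [Fintype V] [Fintype P] (hG : G.Connected) (s : P → V)
    (hinj : Function.Injective s) (p : P) (i : ℕ) (hi : Fintype.card P + i ≤ Fintype.card V) :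
    ∃ K t, Reach G (i * Fintype.card V) s t ∧ Cluster G (i + 1) K t p := by
  classical
  induction i with
  | zero =>
    refine ⟨{s p}, s, .refl _ _, ?_, by simp, by simp, ?_⟩
    · intro u hu v hv
      rw [Finset.mem_singleton] at hu hv
      subst hu; subst hv
      exact ⟨Walk.nil, by simp⟩
    · intro r hr
      rw [Finset.mem_singleton]
      exact fun he => hr (hinj he)
  | succ i ih =>
    obtain ⟨K, t, h1, h2⟩ := ih (by omega)
    have htinj := h1.injective hinj
    obtain ⟨h, hhK, hht⟩ : ∃ h, h ∉ K ∧ ∀ r, t r ≠ h := by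
      by_contra! hcon
      have hsub : (Finset.univ : Finset V) ⊆ K ∪ (Finset.univ.erase p).image t := by
        intro z _
        by_cases hz : z ∈ K
        · exact Finset.mem_union_left _ hz
        · obtain ⟨r, rfl⟩ := hcon z hz
          have : r ≠ p := by rintro rfl; exact hz h2.mem
          exact Finset.mem_union_right _ (Finset.mem_image_of_mem _ (by simp [this]))
      have hc := (Finset.card_le_card hsub).trans (Finset.card_union_le _ _)
      have hc' : ((Finset.univ.erase p).image t).card ≤ Fintype.card P - 1 :=
        Finset.card_image_le.trans (by rw [Finset.card_erase_of_mem (by simp)]; rfl)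
      have := Fintype.card_pos_iff.2 ⟨p⟩
      rw [Finset.card_univ, h2.card] at hc
      omega
    obtain ⟨w⟩ := hG.preconnected h (t p)
    obtain ⟨u, z, hu, hz, hadj, w', hw'⟩ := exists_entry w hhK h2.mem
    obtain ⟨w'', hp, hs⟩ := exists_path_of_walk w'.reverse
    have hout : ∀ x ∈ w''.support, x ∉ K := fun x hx => hw' x (by simpa using hs x hx)
    obtain ⟨t', h3, h4, h5, h6⟩ := Reach.shift w'' hp t htinj hht
    have hl := hp.length_lt
    refine ⟨insert u K, t', (h1.trans h3).mono (by nlinarith), h2.conn.insert hz hadj,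
      by rw [Finset.card_insert_of_notMem hu, h2.card], ?_, ?_⟩
    · rw [h5 p fun hm => hout _ hm h2.mem]
      exact Finset.mem_insert_of_mem h2.mem
    · intro r hr hm
      rcases Finset.mem_insert.1 hm with he | he
      · exact h4 r he
      · by_cases hrs : t r ∈ w''.support
        · exact hout _ (h6 r hrs) he
        · rw [h5 r hrs] at he
          exact h2.free r hr he

/-- Any pebble can be brought to any vertex. -/
lemma deliver [Fintype V] [Fintype P] (hG : G.IsTree) {m : ℕ} (hm : 2 ≤ m) (hgood : Good G m)
    (hcard : Fintype.card P + m ≤ Fintype.card V + 1) (s : P → V) (hinj : Function.Injective s)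
    (p : P) (l : V) : ∃ t, Reach G (6 * m * Fintype.card V) s t ∧ t p = l := by
  obtain ⟨m, rfl⟩ : ∃ m', m = m' + 1 := ⟨m - 1, by omega⟩
  obtain ⟨K, t, h1, h2⟩ := exists_cluster hG.1 s hinj p m (by omega)
  obtain ⟨w, hw⟩ := hG.1.exists_isPath (t p) l
  obtain ⟨t', h3, h4⟩ := Cluster.crawl hG.2 hm hgood w K t h2 (h1.injective hinj) h2.mem
  have hl := hw.length_lt
  refine ⟨t', (h1.trans h3).mono ?_, h4⟩
  have : (m + 1) * w.length ≤ (m + 1) * Fintype.card V := Nat.mul_le_mul_left _ hl.le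
  nlinarith

end PMT

namespace PMT

open SimpleGraph

variable {V P H : Type} {G : SimpleGraph V}

/-! ### Pruning a leaf -/

/-- The first vertex of a longest path is a leaf. -/
lemma eq_snd_of_longest (hG : G.IsAcyclic) {L : ℕ}
    (hL : ∀ (u v : V) (w : G.Walk u v), w.IsPath → w.length ≤ L) {u v x : V} {w : G.Walk u v}
    (hw : w.IsPath) (hl : w.length = L) (hx : G.Adj u x) : x = w.snd := by
  refine hG.eq_snd_of_adj_start hw hx ?_
  by_contra hx'
  have := hL _ _ (Walk.cons hx.symm w) ((Walk.cons_isPath_iff _ _).2 ⟨hw, hx'⟩)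
  rw [Walk.length_cons] at this
  omega

/-- `Good` survives the removal of the first vertex `l` of a longest path. Only the degree of its
neighbour `u` changes, and `u` is not the junction found on any path of the pruned tree: all but
at most one of the neighbours of `u` are leaves, while both neighbours of that junction are interior
vertices of the path. -/
lemma exists_prune [Finite V] [Nontrivial V] (hG : G.IsTree) {m : ℕ} (hgood : Good G m) :
    ∃ l, (G.induce {l}ᶜ).IsTree ∧ Good (G.induce {l}ᶜ) m := by
  classical
  have := Fintype.ofFinite V
  obtain ⟨l, e, w, hw, hmax⟩ := Walk.exists_isPath_forall_isPath_length_le_length G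
  have hlen : 1 ≤ w.length := by
    obtain ⟨x, y, hne⟩ := exists_pair_ne V
    obtain ⟨r, hr⟩ := hG.1.exists_isPath x y
    refine le_trans ?_ (hmax _ _ r hr)
    by_contra h0
    exact hne (Walk.eq_of_length_eq_zero (p := r) (by omega))
  set u := w.getVert 1 with hu
  have hlu : G.Adj l u := by simpa using w.adj_getVert_succ (i := 0) (by omega)
  have hl : ∀ x, G.Adj l x → x = u := fun x hx =>
    eq_snd_of_longest hG.2 hmax hw rfl hx
  -- replacing `l` by another neighbour of `u` again gives a longest path
  have hleaf : ∀ z, G.Adj u z → z ≠ w.getVert 2 → ∀ x, G.Adj z x → x = u := by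
    intro z hz hz2 x hx
    have hz' : z ∉ (w.drop 1).support := by
      intro hm
      apply hz2
      rw [hG.2.eq_snd_of_adj_start (hw.drop 1) hz hm, Walk.snd, Walk.drop_getVert]
    have := eq_snd_of_longest hG.2 hmax
      (w := Walk.cons hz.symm (w.drop 1)) ((Walk.cons_isPath_iff _ _).2 ⟨hw.drop 1, hz'⟩)
      (by rw [Walk.length_cons, Walk.drop_length]; omega) hx
    simpa using this
  refine ⟨l, ⟨?_, hG.2.induce _⟩, ?_⟩
  · refine hG.1.induce_compl_singleton_of_degree_eq_one ?_
    rw [degree_eq_one_iff_existsUnique_adj]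
    exact ⟨u, hlu, hl⟩
  · intro a b r hr hrm
    obtain ⟨i, hi2, him, hdeg⟩ := hgood (r.map (Embedding.induce _).toHom)
      (hr.map Subtype.val_injective) (by rw [Walk.length_map, hrm])
    refine ⟨i, hi2, him, ?_⟩
    rw [Walk.getVert_map] at hdeg
    change 3 ≤ deg G (r.getVert i : V) at hdeg
    have hne : (r.getVert i : V) ≠ u := by
      intro he
      have hadj : ∀ j < m, G.Adj (r.getVert j : V) (r.getVert (j + 1)) := fun j hj =>
        r.adj_getVert_succ (by omega)
      have hinj : ∀ j k, j ≤ m → k ≤ m → (r.getVert j : V) = r.getVert k → j = k :=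
        fun j k hj hk h => hr.getVert_injOn (by simpa [hrm] using hj) (by simpa [hrm] using hk)
          (Subtype.ext h)
      have h1 := hadj (i - 1) (by omega)
      have h2 := hadj i (by omega)
      have h3 := hadj (i - 2) (by omega)
      have h4 := hadj (i + 1) (by omega)
      rw [show i - 1 + 1 = i by omega, he] at h1
      rw [show i - 2 + 1 = i - 1 by omega] at h3
      rw [he] at h2
      by_cases hz : (r.getVert (i - 1) : V) = w.getVert 2
      · have hz' : (r.getVert (i + 1) : V) ≠ w.getVert 2 := by
          intro h
          have := hinj _ _ (by omega) (by omega) (hz.trans h.symm)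
          omega
        have := hinj _ _ (by omega) (by omega) ((hleaf _ h2 hz' _ h4).trans he.symm)
        omega
      · have := hinj _ _ (by omega) (by omega) ((hleaf _ h1.symm hz _ h3.symm).trans he.symm)
        omega
    refine hdeg.trans (le_of_eq ?_)
    unfold deg
    rw [← Set.ncard_image_of_injective _ Subtype.val_injective]
    congr 1
    ext z
    simp only [mem_neighborSet, Set.mem_image, comap_adj, Function.Embedding.subtype_apply,
      Subtype.exists, exists_and_right, exists_eq_right]
    refine ⟨fun h => ⟨?_, h⟩, fun ⟨_, h⟩ => h⟩
    rintro rfl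
    exact hne (hl _ h.symm)

/-! ### Solving by induction on the number of pebbles -/

open Classical in
/-- The placement that extends `s` by putting the pebble `p` at the vertex `l`. -/
noncomputable def extend (p : P) (l : V) (s : {q : P // q ≠ p} → ({l}ᶜ : Set V)) (q : P) : V :=
  if h : q = p then l else (s ⟨q, h⟩ : V)

lemma Reach.extend {p : P} {l : V} {N : ℕ} {s t : {q : P // q ≠ p} → ({l}ᶜ : Set V)}
    (h : Reach (G.induce {l}ᶜ) N s t) : Reach G N (extend p l s) (extend p l t) := by
  induction h with
  | refl N s => exact .refl _ _
  | @step N s s' t q h1 h2 h3 _ ih =>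
    have hq : (q : P) ≠ p := q.2
    refine .step (q : P) (s' := PMT.extend p l s') ?_ ?_ ?_ ih
    · simpa [PMT.extend, hq] using h1
    · intro r
      by_cases hr : r = p
      · have := (s' q).2
        simp only [Set.mem_compl_iff, Set.mem_singleton_iff] at this
        simpa [PMT.extend, hq, hr] using fun h => this h.symm
      · have := h2 ⟨r, hr⟩
        simpa [PMT.extend, hq, hr, Subtype.ext_iff] using this
    · intro r hr
      by_cases hrp : r = p
      · simp [PMT.extend, hrp]
      · have := h3 ⟨r, hrp⟩ (fun h => hr (congrArg Subtype.val h))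
        simp [PMT.extend, hrp, this]

lemma exists_restrict {p : P} {l : V} {s : P → V} (hs : Function.Injective s) (hp : s p = l) :
    ∃ s' : {q : P // q ≠ p} → ({l}ᶜ : Set V), Function.Injective s' ∧ extend p l s' = s := by
  refine ⟨fun q => ⟨s q, fun h => q.2 (hs (h.trans hp.symm))⟩, ?_, ?_⟩
  · intro a b hab
    exact Subtype.ext (hs (congrArg Subtype.val hab))
  · funext q
    by_cases hq : q = p
    · simp [extend, hq, hp]
    · simp [extend, hq]

/-- The leaves procedure: a pebble is delivered to a suitable leaf from both placements, and that
leaf is removed together with the pebble. -/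
lemma solve (m N k : ℕ) (hm : 2 ≤ m) :
    ∀ (V P : Type) [Fintype V] [Fintype P] (G : SimpleGraph V), G.IsTree → Good G m →
      Fintype.card V ≤ N → Fintype.card P = k → k + m ≤ Fintype.card V + 1 →
      ∀ s t : P → V, Function.Injective s → Function.Injective t →
        Reach G (k * (12 * m * N)) s t := by
  classical
  induction k with
  | zero =>
    intro V P _ _ G _ _ _ hP _ s t _ _
    have := Fintype.card_eq_zero_iff.1 hP
    rw [Subsingleton.elim s t]
    exact .refl _ _
  | succ k ih =>
    intro V P _ _ G hG hgood hN hP hcard s t hs ht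
    have : Nontrivial V := Fintype.one_lt_card_iff_nontrivial.1 (by omega)
    obtain ⟨l, hG', hgood'⟩ := exists_prune hG hgood
    obtain ⟨p⟩ : Nonempty P := Fintype.card_pos_iff.1 (by omega)
    obtain ⟨s₁, hs₁, hsp⟩ := deliver hG hm hgood (by omega) s hs p l
    obtain ⟨t₁, ht₁, htp⟩ := deliver hG hm hgood (by omega) t ht p l
    obtain ⟨s₂, hs₂, rfl⟩ := exists_restrict (hs₁.injective hs) hsp
    obtain ⟨t₂, ht₂, rfl⟩ := exists_restrict (ht₁.injective ht) htp
    have hV' : Fintype.card ({l}ᶜ : Set V) = Fintype.card V - 1 := by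
      rw [Fintype.card_compl_set]; simp
    have hP' : Fintype.card {q : P // q ≠ p} = k := by
      rw [Fintype.card_subtype_compl, hP]; simp
    have h := ih ({l}ᶜ : Set V) {q : P // q ≠ p} (G.induce {l}ᶜ) hG' hgood' (by omega) hP'
      (by omega) s₂ t₂ hs₂ ht₂
    refine ((hs₁.trans h.extend).trans (ht₁.symm ht)).mono ?_
    have : m * Fintype.card V ≤ m * N := Nat.mul_le_mul_left _ hN
    nlinarith

/-! ### Corridors -/

lemma le_c1 [Fintype V] {a b : V} {w : G.Walk a b} (h : IsCorridor G w) : w.length ≤ c1 G := by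
  refine le_csSup ⟨Fintype.card V, ?_⟩ ⟨a, b, w, h, rfl⟩
  rintro n ⟨a, b, w, h, rfl⟩
  exact h.1.length_lt.le

lemma le_c2 [Fintype V] {a b : V} {w : G.Walk a b} (h : IsCorridor G w) (ha : 2 < deg G a)
    (hb : 2 < deg G b) : w.length ≤ c2 G := by
  refine le_csSup ⟨Fintype.card V, ?_⟩ ⟨a, b, w, h, ha, hb, rfl⟩
  rintro n ⟨a, b, w, h, _, _, rfl⟩
  exact h.1.length_lt.le

lemma isCorridor_of_getVert {a b : V} {w : G.Walk a b} (hw : w.IsPath) (hl : 1 ≤ w.length)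
    (ha : deg G a ≠ 2) (hb : deg G b ≠ 2)
    (hi : ∀ i, 0 < i → i < w.length → deg G (w.getVert i) = 2) : IsCorridor G w := by
  refine ⟨hw, hl, ha, hb, fun x hx hxa hxb => ?_⟩
  obtain ⟨i, rfl, hil⟩ := Walk.mem_support_iff_exists_getVert.1 hx
  refine hi i (Nat.pos_of_ne_zero ?_) (lt_of_le_of_ne hil ?_)
  · rintro rfl; exact hxa w.getVert_zero
  · rintro rfl; exact hxb w.getVert_length

lemma two_le_deg [Finite V] {a b : V} {w : G.Walk a b} (hw : w.IsPath) {i : ℕ} (h0 : 0 < i)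
    (hi : i < w.length) : 2 ≤ deg G (w.getVert i) := by
  have hne : w.getVert (i - 1) ≠ w.getVert (i + 1) := by
    intro h
    have := hw.getVert_injOn (by simp; omega) (by simp; omega) h
    omega
  rw [← Set.ncard_pair hne]
  refine Set.ncard_le_ncard ?_ (Set.toFinite _)
  rintro z (rfl | rfl)
  · have := w.adj_getVert_succ (i := i - 1) (by omega)
    rw [show i - 1 + 1 = i by omega] at this
    exact this.symm
  · exact w.adj_getVert_succ hi

/-- A path whose interior vertices have degree two extends to a corridor. The induction is on a
bound `k` for the number of steps by which the path can still grow. -/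
lemma length_le_c1 [Fintype V] (hG : G.IsAcyclic) (k : ℕ) :
    ∀ {a b : V} (w : G.Walk a b), w.IsPath → 1 ≤ w.length → Fintype.card V ≤ w.length + k →
      (∀ i, 0 < i → i < w.length → deg G (w.getVert i) = 2) → w.length ≤ c1 G := by
  induction k with
  | zero => exact fun w hw _ hc _ => absurd hw.length_lt (by omega)
  | succ k ih =>
    -- an end of degree two has a neighbour off the path
    have key : ∀ {a b : V} (w : G.Walk a b), w.IsPath → 1 ≤ w.length →
        Fintype.card V ≤ w.length + (k + 1) →
        (∀ i, 0 < i → i < w.length → deg G (w.getVert i) = 2) → deg G a = 2 →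
        w.length ≤ c1 G := by
      intro a b w hw hl hc hi ha
      obtain ⟨z, hz, hz'⟩ := Set.exists_mem_notMem_of_ncard_lt_ncard
        (s := {w.snd}) (t := G.neighborSet a) (by
          rw [Set.ncard_singleton]; unfold deg at ha; omega)
      have hzs : z ∉ w.support := fun hm => hz' (hG.eq_snd_of_adj_start hw hz hm)
      have := ih (Walk.cons (G.adj_symm hz) w) ((Walk.cons_isPath_iff _ _).2 ⟨hw, hzs⟩)
        (by simp) (by rw [Walk.length_cons]; omega) (by
          intro i h0 hil
          rw [Walk.length_cons] at hil
          obtain ⟨j, rfl⟩ : ∃ j, i = j + 1 := ⟨i - 1, by omega⟩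
          rw [Walk.getVert_cons_succ]
          rcases Nat.eq_zero_or_pos j with rfl | hj
          · rw [Walk.getVert_zero]; exact ha
          · exact hi j hj (by omega))
      rw [Walk.length_cons] at this
      omega
    intro a b w hw hl hc hi
    by_cases ha : deg G a = 2
    · exact key w hw hl hc hi ha
    by_cases hb : deg G b = 2
    · have := key w.reverse hw.reverse (by simpa using hl) (by simpa using hc) (by
        intro i h0 hil
        rw [Walk.length_reverse] at hil
        rw [Walk.getVert_reverse]
        exact hi _ (by omega) (by omega)) hb
      simpa using this
    · exact le_c1 (isCorridor_of_getVert hw hl ha hb hi)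

/-- The interior `w₂, …, w_{m-2}` of a path of length `m` contains a junction: otherwise either
`w₁, …, w_{m-1}` is a corridor between junctions, or one of the paths `w₀, …, w_{m-1}` and
`w₁, …, w_m` extends to a corridor; either is too long. -/
lemma good_of_lt [Fintype V] (hG : G.IsAcyclic) {m : ℕ} (h1 : c1 G + 2 ≤ m) (h2 : c2 G + 3 ≤ m) :
    Good G m := by
  intro a b w hw hl
  by_contra! hcon
  have hint : ∀ i, 2 ≤ i → i + 2 ≤ m → deg G (w.getVert i) = 2 := fun i hi hi' =>
    le_antisymm (by have := hcon i hi hi'; omega) (two_le_deg hw (by omega) (by omega))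
  by_cases hA : deg G (w.getVert 1) = 2
  · obtain ⟨a', b', r, hr, hrl, hrw⟩ := segment_path hw (i := 0) (j := m - 1) (by omega) (by omega)
    have := length_le_c1 hG _ r hr (by omega) (Nat.le_add_left _ _) (by
      intro i hi hi'
      rw [hrw i (by omega), zero_add]
      rcases Nat.lt_or_ge 1 i with h | h
      · exact hint i h (by omega)
      · rw [show i = 1 by omega]; exact hA)
    omega
  by_cases hB : deg G (w.getVert (m - 1)) = 2
  · obtain ⟨a', b', r, hr, hrl, hrw⟩ := segment_path hw (i := 1) (j := m) (by omega) (by omega)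
    have := length_le_c1 hG _ r hr (by omega) (Nat.le_add_left _ _) (by
      intro i hi hi'
      rw [hrw i (by omega)]
      rcases Nat.lt_or_ge (1 + i) (m - 1) with h | h
      · exact hint _ (by omega) (by omega)
      · rw [show 1 + i = m - 1 by omega]; exact hB)
    omega
  · obtain ⟨a', b', r, hr, hrl, hrw⟩ := segment_path hw (i := 1) (j := m - 1) (by omega) (by omega)
    have ha' : w.getVert 1 = a' := by simpa using (hrw 0 (by omega)).symm
    have hb' : w.getVert (m - 1) = b' := by
      have := hrw (m - 1 - 1) le_rfl
      rw [← hrl, r.getVert_length, hrl, show 1 + (m - 1 - 1) = m - 1 by omega] at this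
      exact this.symm
    have hA' := two_le_deg hw (i := 1) (by omega) (by omega)
    have hB' := two_le_deg hw (i := m - 1) (by omega) (by omega)
    rw [ha'] at hA hA'
    rw [hb'] at hB hB'
    have := le_c2 (isCorridor_of_getVert hr (by omega) hA hB (by
      intro i hi hi'
      rw [hrw i (by omega)]
      exact hint _ (by omega) (by omega))) (by omega) (by omega)
    omega

/-- The path spanning a path graph is a corridor. -/
lemma card_le_c1 [Fintype V] (hG : G.IsAcyclic) (h : IsPathGraph G) :
    Fintype.card V ≤ c1 G + 1 := by
  classical
  obtain ⟨a, b, w, hw, hs⟩ := h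
  have hcard : Fintype.card V ≤ w.length + 1 := by
    have h1 : (Finset.univ : Finset V) ⊆ w.support.toFinset := fun x _ => by simp [hs x]
    have h2 := (Finset.card_le_card h1).trans w.support.toFinset_card_le
    rwa [Finset.card_univ, Walk.length_support] at h2
  rcases Nat.eq_zero_or_pos w.length with h0 | h0
  · omega
  have : w.length ≤ c1 G := by
    refine length_le_c1 hG 1 w hw h0 hcard fun i hi hil => le_antisymm ?_ (two_le_deg hw hi hil)
    by_contra! h3
    obtain ⟨z, hz, hz1, hz2⟩ := exists_third (x := w.getVert (i - 1)) (y := w.getVert (i + 1)) h3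
    obtain ⟨j, rfl, hj⟩ := Walk.mem_support_iff_exists_getVert.1 (hs z)
    rcases chord hG hw hil.le hj hz with rfl | rfl
    · exact hz2 rfl
    · exact hz1 (by simp)
  omega

end PMT

/-! ### The leaves procedure -/

/-- the Leaves procedure for PMT: pebble motion on trees is solvable with
at most `C·(k·n·c(T) + n²)` moves, where `k = |P|`, for a universal constant `C`. -/
theorem leaves_procedure :
    ∃ C : ℕ, 0 < C ∧
      ∀ (V P H : Type) [Fintype V] [Fintype P] [Fintype H] (G : SimpleGraph V),
        G.IsTree →
        Fintype.card V = Fintype.card P + Fintype.card H →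
        PMT.cT G ≤ Fintype.card H →
        ∀ As At : PMT.Config P H V,
          ∃ (f : List (V × V)) (B : PMT.Config P H V),
            PMT.applyPlan G As f = some B ∧
            f.length ≤
              C * (Fintype.card P * Fintype.card V * PMT.cT G + (Fintype.card V) ^ 2) ∧
            ∀ p : P, B (Sum.inl p) = At (Sum.inl p) := by
  refine ⟨24, by norm_num, ?_⟩
  intro V P H _ _ _ G hG hcard hH As At
  have hs : Function.Injective fun p => As (Sum.inl p) := As.injective.comp Sum.inl_injective
  have ht : Function.Injective fun p => At (Sum.inl p) := At.injective.comp Sum.inl_injective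
  suffices h : PMT.Reach G (24 * (Fintype.card P * Fintype.card V * PMT.cT G +
      (Fintype.card V) ^ 2)) (fun p => As (Sum.inl p)) (fun p => At (Sum.inl p)) by
    exact h.exists_plan As fun _ => rfl
  by_cases hpath : PMT.IsPathGraph G
  · -- there is at most one pebble, which walks to its target
    have hc := PMT.card_le_c1 hG.2 hpath
    rw [show PMT.cT G = PMT.c1 G from if_pos hpath] at hH
    have hsub : Subsingleton P := Fintype.card_le_one_iff_subsingleton.1 (by omega)
    rcases isEmpty_or_nonempty P with hP | ⟨⟨p⟩⟩
    · rw [Subsingleton.elim (fun p => As (Sum.inl p)) (fun p => At (Sum.inl p))]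
      exact .refl _ _
    · obtain ⟨w, hw⟩ := hG.1.exists_isPath (As (Sum.inl p)) (At (Sum.inl p))
      obtain ⟨t, h1, h2, _⟩ := PMT.Reach.walk (q := p) w (fun p => As (Sum.inl p)) rfl
        fun r hr => absurd (Subsingleton.elim r p) hr
      obtain rfl : t = fun p => At (Sum.inl p) := by
        funext r
        rw [Subsingleton.elim r p, h2]
      have := hw.length_lt
      have h4 := Nat.le_self_pow two_ne_zero (Fintype.card V)
      have h5 := Nat.zero_le (Fintype.card P * Fintype.card V * PMT.cT G)
      exact h1.mono (by linarith)
  · have hc : PMT.cT G = max (PMT.c1 G + 1) (PMT.c2 G + 2) := if_neg hpath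
    have h1 : PMT.c1 G + 1 ≤ PMT.cT G := hc ▸ le_max_left _ _
    have h2 : PMT.c2 G + 2 ≤ PMT.cT G := hc ▸ le_max_right _ _
    refine (PMT.solve (PMT.cT G + 1) (Fintype.card V) (Fintype.card P) (by omega) V P G hG
      (PMT.good_of_lt hG.2 (by omega) (by omega)) le_rfl rfl (by omega) _ _ hs ht).mono ?_
    have h3 : Fintype.card P * Fintype.card V * 1 ≤
        Fintype.card P * Fintype.card V * PMT.cT G := Nat.mul_le_mul_left _ (by omega)
    nlinarith
end

section
/- There exists a constant C > 0 such that the following holds: for every tree T=(V,E) with n vertices, every set P of pebbles and set H of holes with |H| ≥ c(T), and all valid initial and final configurations Aˢ and Aᵗ, there exists a plan f solving the pebble motion instance (ρ(Aˢ,f)(p) = Aᵗ(p) for every p ∈ P) such that for every vertex v ∈ V, the number of moves of f that move a pebble onto v is at most C·|P|·c(T); i.e., each vertex is crossed O(|P|·c) times by the pebbles. -/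
/-!
Rearrangements are studied as injective placements `a : Q → V` of distinguishable pebbles, with a
cost function counting, for every vertex, the moves starting or ending there (`Plan`). This cost is
invariant under reversal and relabelling of pebbles, so a preparation can be undone after an
exchange (`Plan.conj`). All but `c = c(T)` of the holes can be treated as extra pebbles, so there
are exactly `c` free vertices. If there are at least two pebbles then `T` has at least `c + 2`
vertices, which forces a junction `w`, and then `c ≥ c₁ + 1` and `c ≥ c₂ + 2`.

Inside a connected region `c` holes can be relocated at cost `2c` per vertex (`relocate`), so they
may be assumed to form a connected set `S₀` containing `w`. It then suffices to exchange any two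
pebbles `p`, `q` at cost `O(c)` per vertex while restoring everything else: composing such
exchanges places `|P|` pebbles at cost `O(|P| c)`. The set `S₀` can be chosen to leave occupied
vertices on two different branches at `w`, so, using a third pebble, one may assume that `w`
separates `p` from `q` (`swap_any`).

The path from `p` to `q` is regarded as a track with a side vertex at each interior junction
(`Track`). Because `c > c₁`, the first junction comes within the first `c` steps, and because
moreover `c > c₂ + 1`, the next junction after a given one comes within `c - 2` steps unless the
track ends before. Hence, with `p` parked at a side vertex and the `c` holes spread along the
track, the holes can pass `p` and open the way to a later side vertex. Greedily advancing to the
furthest reachable side vertex lets every vertex take part in a bounded number of stages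
(`Track.travel`); once `q` is within reach, `p` and `q` are exchanged at the current junction
(`Track.exchange`) and all the preparation is undone.
-/

namespace PMT

variable {V P H : Type}

/- The number of moves of a plan that move a pebble onto the vertex `v` (a move `u → w`
counts if `w = v` and the occupant of `u` just before the move is a pebble). -/
open Classical in
noncomputable def crossCount (G : SimpleGraph V) :
    Config P H V → List (V × V) → V → ℕ
  | _, [], _ => 0
  | A, m :: f, v =>
    match applyMove G A m with
    | none => 0
    | some B =>
        (if m.2 = v ∧ (A.symm m.1).isLeft = true then 1 else 0) + crossCount G B f v

end PMT

/-! ### Plans for placements of pebbles, and relocation of holes -/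

section Plans
open scoped Classical
open Function

variable {V Q : Type} {G : SimpleGraph V}

/-- `Plan G a b k`: pebbles `Q` placed on the vertices by `a` can be brought to the placement `b`
by moving one pebble at a time along an edge to an unoccupied vertex, in such a way that every
vertex `x` is an end of at most `k x` of the moves.  Charging both ends of a move makes the notion
symmetric under reversal. -/
inductive Plan (G : SimpleGraph V) : (Q → V) → (Q → V) → (V → ℕ) → Prop
  | nil (a : Q → V) (k : V → ℕ) : Plan G a a k
  | cons (a b : Q → V) (k l : V → ℕ) (q : Q) (v : V) : G.Adj (a q) v → v ∉ Set.range a →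
      Plan G (update a q v) b k → (∀ x, k x + (if x = a q ∨ x = v then 1 else 0) ≤ l x) →
      Plan G a b l

/-- The cost function equal to `m` on `R` and to `0` elsewhere. -/
noncomputable def ind (R : Set V) (m : ℕ) : V → ℕ := fun x => if x ∈ R then m else 0

lemma Plan.mono {a b : Q → V} {k k' : V → ℕ} (h : Plan G a b k) (hk : ∀ x, k x ≤ k' x) :
    Plan G a b k' := by
  cases h with
  | nil => exact .nil _ _
  | cons _ _ k₀ _ q v h1 h2 h3 h4 => exact .cons _ _ _ _ q v h1 h2 h3 fun x => (h4 x).trans (hk x)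

lemma Plan.trans {a b d : Q → V} {k l : V → ℕ} (h : Plan G a b k) (h' : Plan G b d l) :
    Plan G a d (fun x => k x + l x) := by
  induction h with
  | nil a k => exact h'.mono fun x => by omega
  | cons a b k₀ k₁ q v h1 h2 h3 h4 ih =>
    exact .cons _ _ _ _ q v h1 h2 (ih h') fun x => by have := h4 x; omega

lemma update_injective {a : Q → V} (ha : Injective a) {q : Q} {v : V} (hv : v ∉ Set.range a) :
    Injective (update a q v) := by
  intro x y hxy
  by_cases hx : x = q <;> by_cases hy : y = q
  · rw [hx, hy]
  · subst hx; simp [hy] at hxy; exact absurd ⟨y, hxy.symm⟩ hv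
  · subst hy; simp [hx] at hxy; exact absurd ⟨x, hxy⟩ hv
  · simp [hx, hy] at hxy; exact ha hxy

lemma mem_range_update {a : Q → V} (ha : Injective a) (q : Q) (v x : V) :
    x ∈ Set.range (update a q v) ↔ x = v ∨ (x ∈ Set.range a ∧ x ≠ a q) := by
  constructor
  · rintro ⟨r, rfl⟩
    by_cases hr : r = q
    · subst hr; simp
    · right; simp only [update_of_ne hr]; exact ⟨⟨r, rfl⟩, fun h => hr (ha h)⟩
  · rintro (rfl | ⟨⟨r, rfl⟩, h⟩)
    · exact ⟨q, by simp⟩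
    · refine ⟨r, ?_⟩
      rw [update_of_ne]; rintro rfl; exact h rfl

lemma Plan.injective {a b : Q → V} {k : V → ℕ} (h : Plan G a b k) (ha : Injective a) :
    Injective b := by
  induction h with
  | nil => exact ha
  | cons a b k₀ k₁ q v h1 h2 h3 h4 ih => exact ih (update_injective ha h2)

lemma Plan.single {a : Q → V} {q : Q} {v : V} (h1 : G.Adj (a q) v) (h2 : v ∉ Set.range a) :
    Plan G a (update a q v) (fun x => if x = a q ∨ x = v then 1 else 0) :=
  .cons _ _ (fun _ => 0) _ q v h1 h2 (.nil _ _) fun x => by simp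

lemma Plan.symm {a b : Q → V} {k : V → ℕ} (h : Plan G a b k) (ha : Injective a) :
    Plan G b a k := by
  induction h with
  | nil => exact .nil _ _
  | cons a b k₀ k₁ q v h1 h2 h3 h4 ih =>
    have hs : Plan G (update a q v) (update (update a q v) q (a q))
        (fun x => if x = (update a q v) q ∨ x = a q then 1 else 0) := by
      apply Plan.single
      · simpa using h1.symm
      · rw [mem_range_update ha]
        rintro (h | h)
        · exact h1.ne h
        · exact h.2 rfl
    rw [update_idem, update_eq_self] at hs
    refine ((ih (update_injective ha h2)).trans hs).mono fun x => ?_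
    refine le_trans ?_ (h4 x)
    simp only [update_self, or_comm (a := x = v)]
    exact le_rfl

lemma Plan.permute {a b : Q → V} {k : V → ℕ} (h : Plan G a b k) (σ : Equiv.Perm Q) :
    Plan G (a ∘ σ) (b ∘ σ) k := by
  induction h with
  | nil => exact .nil _ _
  | cons a b k₀ k₁ q v h1 h2 h3 h4 ih =>
    refine .cons _ _ k₀ _ (σ.symm q) v (by simpa using h1) ?_ ?_ (by simpa using h4)
    · rintro ⟨x, hx⟩; exact h2 ⟨σ x, hx⟩
    · convert ih using 1
      funext x
      simp only [update_apply, comp_apply, Equiv.eq_symm_apply]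

/-- Conjugation: if `p` and `q` can be exchanged after some preparation, they can be
exchanged at once, undoing the preparation at the end. -/
lemma Plan.conj {a b : Q → V} {k l : V → ℕ} {p q : Q} (h : Plan G a b k) (ha : Injective a)
    (h' : Plan G b (b ∘ Equiv.swap p q) l) :
    Plan G a (a ∘ Equiv.swap p q) (fun x => 2 * k x + l x) :=
  ((h.trans h').trans ((h.symm ha).permute _)).mono fun x => by omega

lemma Plan.add_ind {a b d : Q → V} {R : Set V} {m n l : ℕ} (h : Plan G a b (ind R m))
    (h' : Plan G b d (ind R n)) (hl : m + n ≤ l := by omega) : Plan G a d (ind R l) :=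
  (h.trans h').mono fun x => by unfold ind; split_ifs <;> omega

lemma Plan.mono_ind {a b : Q → V} {R R' : Set V} {m n : ℕ} (h : Plan G a b (ind R m))
    (hR : R ⊆ R') (hm : m ≤ n := by omega) : Plan G a b (ind R' n) :=
  h.mono fun x => by
    unfold ind
    by_cases hx : x ∈ R
    · simp [hx, hR hx, hm]
    · simp [hx]

/-- A pebble moves along a sequence of distinct, free, consecutively adjacent vertices. -/
lemma Plan.run {a : Q → V} {q : Q} (f : ℕ → V) (m : ℕ) (h0 : a q = f 0)
    (hadj : ∀ i < m, G.Adj (f i) (f (i + 1)))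
    (hinj : ∀ i ≤ m, ∀ j ≤ m, f i = f j → i = j)
    (hfree : ∀ i, 1 ≤ i → i ≤ m → f i ∉ Set.range a) (R : Set V) (hR : ∀ i ≤ m, f i ∈ R) :
    Plan G a (update a q (f m)) (ind R 2) := by
  have key : ∀ n ≤ m, Plan G a (update a q (f n))
      (fun x => if x = f n then 1 else if ∃ i < n, x = f i then 2 else 0) := by
    intro n hn
    induction n with
    | zero => rw [← h0, update_eq_self]; exact .nil _ _
    | succ n ih =>
      have hs : Plan G (update a q (f n)) (update (update a q (f n)) q (f (n + 1)))
          (fun x => if x = (update a q (f n)) q ∨ x = f (n + 1) then 1 else 0) := by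
        apply Plan.single
        · simpa using hadj n (by omega)
        · rintro ⟨r, hr⟩
          by_cases hrq : r = q
          · subst hrq
            rw [update_self] at hr
            have := hinj n (by omega) (n + 1) hn hr
            omega
          · rw [update_of_ne hrq] at hr
            exact hfree (n + 1) (by omega) hn ⟨r, hr⟩
      rw [update_idem] at hs
      refine ((ih (by omega)).trans hs).mono fun x => ?_
      simp only [update_self]
      by_cases h1 : x = f (n + 1)
      · have h2 : x ≠ f n := fun h => by
          have := hinj n (by omega) (n + 1) hn (h.symm.trans h1)
          omega
        have h3 : ¬ ∃ i < n, x = f i := by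
          rintro ⟨i, hi, h⟩
          have := hinj i (by omega) (n + 1) hn (h.symm.trans h1)
          omega
        rw [if_neg h2, if_neg h3, if_pos (Or.inr h1), if_pos h1]
      · by_cases h2 : x = f n
        · have h3 : ∃ i < n + 1, x = f i := ⟨n, by omega, h2⟩
          rw [if_pos h2, if_pos (Or.inl h2), if_neg h1, if_pos h3]
        · rw [if_neg h2, if_neg (by tauto : ¬ (x = f n ∨ x = f (n + 1))), if_neg h1]
          by_cases h3 : ∃ i < n, x = f i
          · obtain ⟨i, hi, h⟩ := h3
            rw [if_pos ⟨i, hi, h⟩, if_pos ⟨i, by omega, h⟩]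
          · rw [if_neg h3]; omega
  refine (key m le_rfl).mono fun x => ?_
  unfold ind
  by_cases h1 : x = f m
  · rw [if_pos h1, if_pos (h1 ▸ hR m le_rfl)]; omega
  · rw [if_neg h1]
    by_cases h3 : ∃ i < m, x = f i
    · obtain ⟨i, hi, h⟩ := h3
      rw [if_pos ⟨i, hi, h⟩, if_pos (h ▸ hR i hi.le)]
    · rw [if_neg h3]; omega

lemma Plan.one {a : Q → V} {q : Q} {v : V} (h1 : G.Adj (a q) v) (h2 : v ∉ Set.range a)
    (R : Set V) (hu : a q ∈ R) (hv : v ∈ R) : Plan G a (update a q v) (ind R 2) :=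
  (Plan.single h1 h2).mono fun x => by
    unfold ind
    by_cases hx : x ∈ R
    · rw [if_pos hx]; split_ifs <;> omega
    · rw [if_neg hx, if_neg]; rintro (rfl | rfl) <;> contradiction

/-- A hole moves along a path from `h` to `g`; the occupied set changes by exchanging `g` for `h`,
and pebbles off the path stay put. -/
lemma hole_walk {h g : V} (p : G.Walk h g) (hp : p.IsPath) : ∀ a : Q → V, Injective a →
    h ∉ Set.range a → g ∈ Set.range a → ∃ b : Q → V, Injective b ∧
      Plan G a b (fun x => p.support.count x + p.support.tail.count x) ∧
      (∀ x, x ∈ Set.range b ↔ x = h ∨ (x ∈ Set.range a ∧ x ≠ g)) ∧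
      ∀ q, a q ∉ p.support → b q = a q := by
  induction p with
  | nil => intro a _ h1 h2; exact absurd h2 h1
  | @cons h u g hu p ih =>
    intro a ha h1 h2
    rw [SimpleGraph.Walk.cons_isPath_iff] at hp
    have hcount : ∀ x, p.support.count x + p.support.tail.count x +
        (if x = u ∨ x = h then 1 else 0) ≤
        (SimpleGraph.Walk.cons hu p).support.count x +
          (SimpleGraph.Walk.cons hu p).support.tail.count x := by
      intro x
      have e : p.support.count x = p.support.tail.count x + (if u = x then 1 else 0) := by
        conv_lhs => rw [← SimpleGraph.Walk.cons_tail_support p]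
        rw [List.count_cons]; simp
      simp only [SimpleGraph.Walk.support_cons, List.tail_cons, List.count_cons, beq_iff_eq,
        eq_comm (a := x)]
      split_ifs at * <;> simp_all
    by_cases hur : u ∈ Set.range a
    · obtain ⟨q, rfl⟩ := hur
      have hrange := mem_range_update ha q h
      have hinj := update_injective ha (q := q) h1
      by_cases hg : a q = g
      · refine ⟨update a q h, hinj, ?_, ?_, ?_⟩
        · refine .cons _ _ (fun x => p.support.count x + p.support.tail.count x) _ q h hu.symm h1
            (.nil _ _) fun x => ?_
          exact hcount x
        · intro x; rw [hrange, hg]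
        · intro r hr
          rw [update_of_ne]
          rintro rfl; simp at hr
      · obtain ⟨b, hb1, hb2, hb3, hb4⟩ := ih hp.1 (update a q h) hinj
          (by rw [hrange]; rintro (h | h)
              · exact hu.ne h.symm
              · exact h.2 rfl)
          (by rw [hrange]; exact Or.inr ⟨h2, fun h => hg h.symm⟩)
        refine ⟨b, hb1, .cons _ _ _ _ q h hu.symm h1 hb2 fun x => ?_, ?_, ?_⟩
        · exact hcount x
        · intro x
          rw [hb3, hrange]
          have : h ≠ g := by rintro rfl; exact h1 h2
          constructor
          · rintro (rfl | ⟨rfl | hx, hx2⟩)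
            · exact Or.inr ⟨⟨q, rfl⟩, hg⟩
            · exact Or.inl rfl
            · exact Or.inr ⟨hx.1, hx2⟩
          · rintro (rfl | hx)
            · exact Or.inr ⟨Or.inl rfl, this⟩
            · by_cases hxq : x = a q
              · exact Or.inl hxq
              · exact Or.inr ⟨Or.inr ⟨hx.1, hxq⟩, hx.2⟩
        · intro r hr
          have hrq : r ≠ q := by rintro rfl; simp at hr
          have := hb4 r (by
            rw [update_of_ne hrq]; simp at hr; exact hr.2)
          rw [this, update_of_ne hrq]
    -- The next vertex is itself a hole: that hole travels ahead, and `h` takes its place.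
    · obtain ⟨b, hb1, hb2, hb3, hb4⟩ := ih hp.1 a ha hur h2
      obtain ⟨q, hq⟩ := (hb3 u).2 (Or.inl rfl)
      have hh : h ∉ Set.range b := by
        rw [hb3]; rintro (h | h)
        · exact hu.ne h
        · exact h1 h.1
      refine ⟨update b q h, update_injective hb1 hh, ?_, ?_, ?_⟩
      · refine (hb2.trans (Plan.single (by rw [hq]; exact hu.symm) hh)).mono fun x => ?_
        rw [hq]; exact hcount x
      · intro x
        rw [mem_range_update hb1, hb3, hq]
        constructor
        · rintro (rfl | ⟨rfl | hx, hx2⟩)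
          · exact Or.inl rfl
          · exact absurd rfl hx2
          · exact Or.inr hx
        · rintro (rfl | hx)
          · exact Or.inl rfl
          · exact Or.inr ⟨Or.inr hx, by rintro rfl; exact hur hx.1⟩
      · intro r hr
        simp at hr
        have := hb4 r hr.2
        rw [update_of_ne, this]
        rintro rfl
        rw [this] at hq
        exact hr.2 (by rw [hq]; simp)

/-- `x` and `y` are joined by a walk inside `R`. -/
def Lnk (G : SimpleGraph V) (R : Set V) (x y : V) : Prop :=
  ∃ p : G.Walk x y, ∀ u ∈ p.support, u ∈ R

/-- Any two vertices of `R` are joined by a walk inside `R`. -/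
def Conn (G : SimpleGraph V) (R : Set V) : Prop := ∀ x ∈ R, ∀ y ∈ R, Lnk G R x y

lemma Lnk.refl {R : Set V} {x : V} (h : x ∈ R) : Lnk G R x x :=
  ⟨.nil, by simpa using h⟩

lemma Lnk.symm {R : Set V} {x y : V} (h : Lnk G R x y) : Lnk G R y x := by
  obtain ⟨p, hp⟩ := h
  exact ⟨p.reverse, by simpa using hp⟩

lemma Lnk.trans {R : Set V} {x y z : V} (h : Lnk G R x y) (h' : Lnk G R y z) : Lnk G R x z := by
  obtain ⟨p, hp⟩ := h
  obtain ⟨q, hq⟩ := h'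
  refine ⟨p.append q, fun u hu => ?_⟩
  rw [SimpleGraph.Walk.mem_support_append_iff] at hu
  exact hu.elim (hp u) (hq u)

lemma Lnk.adj {R : Set V} {x y : V} (h : G.Adj x y) (hx : x ∈ R) (hy : y ∈ R) : Lnk G R x y :=
  ⟨h.toWalk, by simp [hx, hy]⟩

lemma Lnk.mono {R R' : Set V} {x y : V} (h : Lnk G R x y) (hR : R ⊆ R') : Lnk G R' x y := by
  obtain ⟨p, hp⟩ := h
  exact ⟨p, fun u hu => hR (hp u hu)⟩

lemma Conn.of_base {R : Set V} (w : V) (h : ∀ x ∈ R, Lnk G R w x) : Conn G R :=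
  fun x hx y hy => (h x hx).symm.trans (h y hy)

/-- `S` is the set of unoccupied vertices of the placement `a`. -/
def Holes (a : Q → V) (S : Finset V) : Prop := ∀ u, u ∈ S ↔ u ∉ Set.range a

/-- Inside a connected region holes can be relocated at will: each hole travels along a path, so
that `n` displaced holes cost at most `2 n` per vertex, and pebbles outside the region stay put. -/
lemma relocate_aux {R : Set V} (hR : Conn G R) (n : ℕ) : ∀ (a : Q → V) (S S' : Finset V),
    Injective a → Holes a S → ↑S ⊆ R → ↑S' ⊆ R → S.card = S'.card → (S \ S').card ≤ n →
    ∃ b : Q → V, Injective b ∧ Plan G a b (ind R (2 * n)) ∧ Holes b S' ∧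
      ∀ q, a q ∉ R → b q = a q := by
  induction n with
  | zero =>
    intro a S S' ha hS h1 h2 h3 h4
    have : S ⊆ S' := by simpa [Finset.sdiff_eq_empty_iff_subset] using h4
    have := Finset.eq_of_subset_of_card_le this h3.ge
    subst this
    exact ⟨a, ha, .nil _ _, hS, fun _ _ => rfl⟩
  | succ n ih =>
    intro a S S' ha hS h1 h2 h3 h4
    by_cases h0 : (S \ S').card ≤ n
    · obtain ⟨b, hb1, hb2, hb3⟩ := ih a S S' ha hS h1 h2 h3 h0
      exact ⟨b, hb1, hb2.mono_ind subset_rfl, hb3⟩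
    · have hc : (S' \ S).card = (S \ S').card := Finset.card_sdiff_comm h3.symm
      obtain ⟨h, hh⟩ := Finset.card_pos.1 (show 0 < (S \ S').card by omega)
      obtain ⟨g, hg⟩ := Finset.card_pos.1 (show 0 < (S' \ S).card by omega)
      rw [Finset.mem_sdiff] at hh hg
      obtain ⟨p, hp⟩ := hR h (h1 hh.1) g (h2 hg.1)
      have hpp := p.bypass_isPath
      have hps : ∀ u ∈ p.bypass.support, u ∈ R :=
        fun u hu => hp u (p.support_bypass_subset_support hu)
      obtain ⟨b, hb1, hb2, hb3, hb4⟩ := hole_walk p.bypass hpp a ha ((hS h).1 hh.1)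
        (by have := (hS g).not.1 hg.2; simpa using this)
      have hhg : h ≠ g := by rintro rfl; exact hh.2 hg.1
      obtain ⟨d, hd1, hd2, hd3, hd4⟩ := ih b (insert g (S.erase h)) S' hb1
        (by
          intro u
          rw [hb3, Finset.mem_insert, Finset.mem_erase, hS]
          by_cases hug : u = g
          · subst hug; simp [Ne.symm hhg]
          · simp [hug])
        (by
          intro u hu
          simp only [Finset.coe_insert, Finset.coe_erase, Set.mem_insert_iff, Set.mem_sdiff] at hu
          rcases hu with rfl | hu
          · exact h2 hg.1
          · exact h1 hu.1)
        h2
        (by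
          rw [Finset.card_insert_of_notMem (by simp [hg.2]), Finset.card_erase_of_mem hh.1, ← h3]
          have := Finset.card_pos.2 ⟨h, hh.1⟩
          omega)
        (by
          have : insert g (S.erase h) \ S' = (S \ S').erase h := by
            ext u
            simp only [Finset.mem_sdiff, Finset.mem_insert, Finset.mem_erase]
            constructor
            · rintro ⟨rfl | h5, h6⟩
              · exact absurd hg.1 h6
              · exact ⟨h5.1, h5.2, h6⟩
            · rintro ⟨h5, h6, h7⟩
              exact ⟨Or.inr ⟨h5, h6⟩, h7⟩
          rw [this, Finset.card_erase_of_mem (Finset.mem_sdiff.2 hh)]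
          omega)
      refine ⟨d, hd1, ?_, hd3, ?_⟩
      · have : Plan G a b (ind R 2) := hb2.mono fun x => by
          have hn := hpp.support_nodup
          have c1 := List.nodup_iff_count_le_one.1 hn x
          have c2 := List.nodup_iff_count_le_one.1 hn.tail x
          unfold ind
          by_cases hx : x ∈ R
          · rw [if_pos hx]; omega
          · have c3 : x ∉ p.bypass.support := fun h => hx (hps x h)
            have c4 : x ∉ p.bypass.support.tail := fun h => c3 (List.mem_of_mem_tail h)
            rw [List.count_eq_zero_of_not_mem c3, List.count_eq_zero_of_not_mem c4]
            omega
        exact this.add_ind hd2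
      · intro q hq
        have e : b q = a q := hb4 q fun h => hq (hps _ h)
        rw [hd4 q (by rwa [e]), e]

lemma relocate {R : Set V} (hR : Conn G R) {c : ℕ} {a : Q → V} {S S' : Finset V}
    (ha : Injective a) (hS : Holes a S) (h1 : ↑S ⊆ R) (h2 : ↑S' ⊆ R) (h3 : S.card = c)
    (h4 : S'.card = c) :
    ∃ b : Q → V, Injective b ∧ Plan G a b (ind R (2 * c)) ∧ Holes b S' ∧
      ∀ q, a q ∉ R → b q = a q :=
  relocate_aux hR c a S S' ha hS h1 h2 (h3.trans h4.symm)
    ((Finset.card_le_card Finset.sdiff_subset).trans h3.le)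

/-! ### Exchanging pebbles along a track of a path -/

/-- A simple path `v 0, …, v D` with a set `J` of interior indices at which a side vertex `s j`,
adjacent to `v j` and off the path, is available, together with the gap conditions: the first side
vertex comes before index `c`, and from each side vertex the next one is near enough for the path
between them to be emptied by `c` holes.  `τ` reads off the index of a path or side vertex. -/
structure Track (G : SimpleGraph V) (c D : ℕ) (v : ℕ → V) (J : Set ℕ) (s : ℕ → V)
    (τ : V → ℕ) : Prop where
  adj : ∀ i < D, G.Adj (v i) (v (i + 1))
  tv : ∀ i ≤ D, τ (v i) = i
  J_pos : ∀ j ∈ J, 0 < j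
  J_lt : ∀ j ∈ J, j < D
  adj_s : ∀ j ∈ J, G.Adj (v j) (s j)
  ts : ∀ j ∈ J, τ (s j) = j
  ne : ∀ j ∈ J, ∀ i ≤ D, s j ≠ v i
  gap0 : c ≤ D → ∃ j ∈ J, j < c
  gap : ∀ j ∈ J, j + c ≤ D → ∃ j' ∈ J, j < j' ∧ j' + 2 ≤ j + c

/-- The vertices `v m, …, v (n - 1)`. -/
noncomputable def seg (v : ℕ → V) (m n : ℕ) : Finset V := (Finset.Ico m n).image v

lemma mem_seg {v : ℕ → V} {m n : ℕ} {x : V} : x ∈ seg v m n ↔ ∃ t, m ≤ t ∧ t < n ∧ v t = x := by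
  simp [seg, and_assoc]

namespace Track
variable {c D : ℕ} {v : ℕ → V} {J : Set ℕ} {s : ℕ → V} {τ : V → ℕ}

lemma inj (T : Track G c D v J s τ) {i j : ℕ} (hi : i ≤ D) (hj : j ≤ D) (h : v i = v j) :
    i = j := by
  rw [← T.tv i hi, h, T.tv j hj]

lemma card_seg (T : Track G c D v J s τ) {m n : ℕ} (hn : n ≤ D + 1) :
    (seg v m n).card = n - m := by
  rw [seg, Finset.card_image_of_injOn, Nat.card_Ico]
  intro i hi j hj h
  simp only [Finset.coe_Ico, Set.mem_Ico] at hi hj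
  exact T.inj (by omega) (by omega) h

lemma s_notMem (T : Track G c D v J s τ) {j m n : ℕ} (hj : j ∈ J) (hn : n ≤ D + 1) :
    s j ∉ seg v m n := by
  rw [mem_seg]
  rintro ⟨t, h1, h2, h3⟩
  exact T.ne j hj t (by omega) h3.symm

lemma v_notMem (T : Track G c D v J s τ) {m n : ℕ} (hn : n ≤ D) : v D ∉ seg v m n := by
  rw [mem_seg]
  rintro ⟨t, h1, h2, h3⟩
  have := T.inj (by omega) le_rfl h3
  omega

lemma card_insert (T : Track G c D v J s τ) {j m n : ℕ} (hj : j ∈ J) (hn : n ≤ D + 1) :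
    (insert (s j) (seg v m n)).card = n - m + 1 := by
  rw [Finset.card_insert_of_notMem (T.s_notMem hj hn), T.card_seg hn]

lemma lnk (T : Track G c D v J s τ) {m n : ℕ} {R : Set V} (hn : n ≤ D + 1)
    (hR : ∀ t, m ≤ t → t < n → v t ∈ R) {i j : ℕ} (hi : m ≤ i) (hi' : i < n) (hj : m ≤ j)
    (hj' : j < n) : Lnk G R (v i) (v j) := by
  have key : ∀ i j, m ≤ i → i ≤ j → j < n → Lnk G R (v i) (v j) := by
    intro i j h1 h2 h3
    induction j, h2 using Nat.le_induction with
    | base => exact .refl (hR i h1 h3)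
    | succ j h4 ih =>
      exact (ih (by omega)).trans
        (.adj (T.adj j (by omega)) (hR j (by omega) (by omega)) (hR _ (by omega) h3))
  rcases le_total i j with h | h
  · exact key i j hi h hj'
  · exact (key j i hj h hi').symm

lemma conn_seg (T : Track G c D v J s τ) {m n : ℕ} (hn : n ≤ D + 1) :
    Conn G (↑(seg v m n) : Set V) := by
  intro x hx y hy
  rw [Finset.mem_coe, mem_seg] at hx hy
  obtain ⟨i, h1, h2, rfl⟩ := hx
  obtain ⟨j, h3, h4, rfl⟩ := hy
  exact T.lnk hn (fun t ht ht' => by rw [Finset.mem_coe, mem_seg]; exact ⟨t, ht, ht', rfl⟩)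
    h1 h2 h3 h4

lemma conn_insert (T : Track G c D v J s τ) {j m n : ℕ} (hj : j ∈ J) (hn : n ≤ D + 1)
    (h1 : m ≤ j) (h2 : j < n) : Conn G (↑(insert (s j) (seg v m n)) : Set V) := by
  have hv : ∀ t, m ≤ t → t < n → v t ∈ (↑(insert (s j) (seg v m n)) : Set V) := by
    intro t ht ht'
    rw [Finset.mem_coe, Finset.mem_insert, mem_seg]
    exact Or.inr ⟨t, ht, ht', rfl⟩
  refine Conn.of_base (v j) fun x hx => ?_
  have hx' := hx
  rw [Finset.mem_coe, Finset.mem_insert, mem_seg] at hx'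
  rcases hx' with rfl | ⟨t, h3, h4, rfl⟩
  · exact .adj (T.adj_s j hj) (hv j h1 h2) hx
  · exact T.lnk hn hv h1 h2 h3 h4

/-- A pebble runs along free vertices of the track, in increasing direction. -/
lemma forward (T : Track G c D v J s τ) {a : Q → V} {p : Q} {i j : ℕ} (hij : i ≤ j) (hj : j ≤ D)
    (hp : a p = v i) (hfree : ∀ t, i < t → t ≤ j → v t ∉ Set.range a) (R : Set V)
    (hR : ∀ t, i ≤ t → t ≤ j → v t ∈ R) : Plan G a (update a p (v j)) (ind R 2) := by
  have := Plan.run (G := G) (a := a) (q := p) (fun t => v (i + t)) (j - i) hp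
    (fun t ht => T.adj (i + t) (by omega))
    (fun t ht t' ht' h => by have := T.inj (by omega) (by omega) h; omega)
    (fun t ht ht' => hfree _ (by omega) (by omega)) R (fun t ht => hR _ (by omega) (by omega))
  simpa [Nat.add_sub_cancel' hij] using this

/-- A pebble runs along free vertices of the track, in decreasing direction. -/
lemma backward (T : Track G c D v J s τ) {a : Q → V} {p : Q} {i j : ℕ} (hij : i ≤ j) (hj : j ≤ D)
    (hp : a p = v j) (hfree : ∀ t, i ≤ t → t < j → v t ∉ Set.range a) (R : Set V)
    (hR : ∀ t, i ≤ t → t ≤ j → v t ∈ R) : Plan G a (update a p (v i)) (ind R 2) := by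
  have := Plan.run (G := G) (a := a) (q := p) (fun t => v (j - t)) (j - i) hp
    (fun t ht => by
      have := (T.adj (j - t - 1) (by omega)).symm
      rwa [show j - t - 1 + 1 = j - t by omega] at this)
    (fun t ht t' ht' h => by have := T.inj (by omega) (by omega) h; omega)
    (fun t ht ht' => hfree _ (by omega) (by omega)) R (fun t ht => hR _ (by omega) (by omega))
  simpa [Nat.sub_sub_self hij] using this

/-- The exchange at a junction: `p` waits at the side vertex `s j` while `q` passes to
`v (j - 1)`; then `p` goes to the place of `q`, and `q` to that of `p`. -/
lemma exchange (T : Track G c D v J s τ) {a : Q → V} (ha : Injective a) {p q : Q} {j : ℕ}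
    (hj : j ∈ J) (hp : a p = s j) (hq : a q = v D)
    (hfree : ∀ t, j ≤ t + 1 → t < D → v t ∉ Set.range a) (R : Set V)
    (hR : ∀ t, j ≤ t + 1 → t ≤ D → v t ∈ R) (hs : s j ∈ R) :
    Plan G a (a ∘ Equiv.swap p q) (ind R 10) := by
  have hj0 := T.J_pos j hj
  have hjD := T.J_lt j hj
  have hpq : p ≠ q := by
    rintro rfl
    exact T.ne j hj D le_rfl (hp.symm.trans hq)
  have hadj := T.adj_s j hj
  have hadj' := T.adj (j - 1) (by omega)
  rw [show j - 1 + 1 = j by omega] at hadj'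
  have hvD : ∀ t, t < D → v t ≠ v D := fun t ht h => by
    have := T.inj (by omega) le_rfl h; omega
  have hsv : ∀ t, t ≤ D → v t ≠ s j := fun t ht h => T.ne j hj t ht h.symm
  have hvj : ∀ t, j ≤ t → t ≤ D → v t ≠ v (j - 1) := fun t ht ht' h => by
    have := T.inj (by omega) (by omega) h; omega
  have h1 : Plan G a (update a q (v (j - 1))) (ind R 2) :=
    T.backward (by omega) le_rfl hq (fun t ht ht' => hfree t (by omega) ht') R
      (fun t ht ht' => hR t (by omega) ht')
  set a1 := update a q (v (j - 1)) with ha1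
  have i1 := h1.injective ha
  have p1 : a1 p = s j := by rw [ha1, update_of_ne hpq, hp]
  have q1 : a1 q = v (j - 1) := by simp [ha1]
  have r1 : ∀ x, x ∈ Set.range a1 ↔ x = v (j - 1) ∨ (x ∈ Set.range a ∧ x ≠ v D) := by
    intro x; rw [ha1, mem_range_update ha, hq]
  have f1 : ∀ t, j ≤ t → t ≤ D → v t ∉ Set.range a1 := by
    intro t ht ht'
    rw [r1]
    rintro (h | ⟨h, h'⟩)
    · exact hvj t ht ht' h
    · have : t ≠ D := by rintro rfl; exact h' rfl
      exact hfree t (by omega) (by omega) h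
  have h2 : Plan G a1 (update a1 p (v j)) (ind R 2) :=
    Plan.one (by rw [p1]; exact hadj.symm) (f1 j le_rfl hjD.le) R (by rwa [p1])
      (hR j (by omega) hjD.le)
  have h3 : Plan G (update a1 p (v j)) (update (update a1 p (v j)) p (v D)) (ind R 2) :=
    T.forward hjD.le le_rfl (by simp)
      (fun t ht ht' => by
        rw [mem_range_update i1]
        rintro (h | h)
        · have := T.inj ht' hjD.le h; omega
        · exact f1 t ht.le ht' h.1) R (fun t ht ht' => hR t (by omega) ht')
  rw [update_idem] at h3
  set a3 := update a1 p (v D) with ha3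
  have h13 : Plan G a a3 (ind R 6) := (h1.add_ind h2 (l := 4)).add_ind h3
  have i3 := h13.injective ha
  have q3 : a3 q = v (j - 1) := by rw [ha3, update_of_ne hpq.symm, q1]
  have r3 : ∀ x, x ∈ Set.range a3 ↔ x = v D ∨ (x ∈ Set.range a1 ∧ x ≠ s j) := by
    intro x; rw [ha3, mem_range_update i1, p1]
  have h4 : Plan G a3 (update a3 q (v j)) (ind R 2) := by
    refine Plan.one (by rw [q3]; exact hadj') ?_ R (by rw [q3]; exact hR _ (by omega) (by omega))
      (hR j (by omega) hjD.le)
    rw [r3]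
    rintro (h | h)
    · exact hvD j hjD h
    · exact f1 j le_rfl hjD.le h.1
  have i4 := h4.injective i3
  have h5 : Plan G (update a3 q (v j)) (update (update a3 q (v j)) q (s j)) (ind R 2) := by
    refine Plan.one (by simpa using hadj) ?_ R (by simpa using hR j (by omega) hjD.le) hs
    rw [mem_range_update i3, r3]
    rintro (h | ⟨h | h, -⟩)
    · exact hsv j hjD.le h.symm
    · exact hsv D le_rfl h.symm
    · exact h.2 rfl
  rw [update_idem] at h5
  have h15 : Plan G a (update a3 q (s j)) (ind R 10) := (h13.add_ind h4 (l := 8)).add_ind h5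
  convert h15 using 1
  funext r
  simp only [comp_apply]
  by_cases hr : r = q
  · subst hr; simp [hp]
  · rw [update_of_ne hr]
    by_cases hr' : r = p
    · subst hr'; simp [ha3, hq]
    · rw [Equiv.swap_apply_of_ne_of_ne hr' hr, ha3, update_of_ne hr', ha1, update_of_ne hr]

/-- The pebble `p` goes from one side vertex to the next through an emptied stretch. -/
lemma advance (T : Track G c D v J s τ) {a : Q → V} (ha : Injective a) {p : Q} {j j' : ℕ}
    (hj : j ∈ J) (hj' : j' ∈ J) (hjj : j < j') (hp : a p = s j)
    (hfree : ∀ t, j ≤ t → t ≤ j' → v t ∉ Set.range a) (hsfree : s j' ∉ Set.range a) (R : Set V)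
    (hR : ∀ t, j ≤ t → t ≤ j' → v t ∈ R) (hs : s j ∈ R) (hs' : s j' ∈ R) :
    Plan G a (update a p (s j')) (ind R 6) := by
  have hD' := T.J_lt j' hj'
  have h1 : Plan G a (update a p (v j)) (ind R 2) :=
    Plan.one (by rw [hp]; exact (T.adj_s j hj).symm) (hfree j le_rfl hjj.le) R (by rwa [hp])
      (hR j le_rfl hjj.le)
  have h2 : Plan G (update a p (v j)) (update (update a p (v j)) p (v j')) (ind R 2) :=
    T.forward hjj.le hD'.le (by simp)
      (fun t ht ht' => by
        rw [mem_range_update ha]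
        rintro (h | h)
        · have := T.inj (by omega) (by omega) h; omega
        · exact hfree t ht.le ht' h.1) R hR
  rw [update_idem] at h2
  have h3 : Plan G (update a p (v j')) (update (update a p (v j')) p (s j')) (ind R 2) := by
    refine Plan.one (by simpa using T.adj_s j' hj') ?_ R (by simpa using hR j' hjj.le le_rfl) hs'
    rw [mem_range_update ha]
    rintro (h | h)
    · exact T.ne j' hj' j' hD'.le h
    · exact hsfree h.1
  rw [update_idem] at h3
  exact (h1.add_ind h2 (l := 4)).add_ind h3

/-- The heart of the argument: `p` waits at the side vertex `s j`, the holes are the `c`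
consecutive track vertices from index `s0` on, and `q` is at the end of the track.  Then `p` and
`q` can be exchanged at cost `O(c)` per vertex.

As long as `q` is out of reach, the holes pass `p`, which then advances to the furthest side vertex
within reach of the holes; a stage touches only indices from `s0` to `j + c - 1`.  Since the choice
of `j` is greedy, two consecutive stages advance by `c - 1`, so any index is touched by at most
four stages.  The graded bounds record this overlap in a form amenable to induction. -/
lemma travel (T : Track G c D v J s τ) (hc : 2 ≤ c) (p q : Q) (n : ℕ) :
    ∀ (s0 j : ℕ) (a : Q → V), D - j ≤ n → Injective a → j ∈ J → s0 < j → j < s0 + c →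
      s0 + c ≤ D → (∀ i ∈ J, j < i → s0 + c ≤ i + 1) → a p = s j → a q = v D →
      Holes a (seg v s0 (s0 + c)) →
      ∃ k : V → ℕ, Plan G a (a ∘ Equiv.swap p q) k ∧ ∀ x,
        (τ x < s0 → k x = 0) ∧ (τ x ≤ s0 → k x ≤ 8 * c + 12) ∧
        (τ x ≤ j → k x ≤ 2 * (8 * c + 12)) ∧ (τ x < s0 + c → k x ≤ 3 * (8 * c + 12)) ∧
        k x ≤ 4 * (8 * c + 12) := by
  induction n with
  | zero =>
    intro s0 j a h1 _ hj
    have := T.J_lt j hj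
    omega
  | succ n ih =>
    intro s0 j a h1 ha hj h2 h3 h4 h5 hp hq hS
    have hjD := T.J_lt j hj
    by_cases hfin : D < j + c
    · obtain ⟨b, hb1, hb2, hb3, hb4⟩ := relocate (c := c) (S' := seg v (D - c) D)
        (T.conn_seg (m := s0) (n := D) (by omega)) ha hS
        (by
          intro x hx
          rw [Finset.mem_coe, mem_seg] at hx ⊢
          obtain ⟨t, _, _, ht⟩ := hx
          exact ⟨t, by omega, by omega, ht⟩)
        (by
          intro x hx
          rw [Finset.mem_coe, mem_seg] at hx ⊢
          obtain ⟨t, _, _, ht⟩ := hx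
          exact ⟨t, by omega, by omega, ht⟩)
        (by rw [T.card_seg (by omega)]; omega) (by rw [T.card_seg (by omega)]; omega)
      have hbp : b p = s j := by
        rw [hb4 p (by rw [hp]; exact T.s_notMem hj (by omega)), hp]
      have hbq : b q = v D := by
        rw [hb4 q (by rw [hq]; exact T.v_notMem le_rfl), hq]
      have hsw := T.exchange hb1 hj hbp hbq
        (fun t ht ht' => by
          rw [← hb3, mem_seg]; exact ⟨t, by omega, ht', rfl⟩) {x | s0 ≤ τ x}
        (fun t ht ht' => by simp only [Set.mem_ofPred_eq]; rw [T.tv t ht']; omega)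
        (by simp only [Set.mem_ofPred_eq]; rw [T.ts j hj]; omega)
      have hb2' : Plan G a b (ind {x | s0 ≤ τ x} (2 * c)) := hb2.mono_ind (by
        intro x hx
        rw [Finset.mem_coe, mem_seg] at hx
        obtain ⟨t, _, _, rfl⟩ := hx
        simp only [Set.mem_ofPred_eq]; rw [T.tv t (by omega)]; omega)
      refine ⟨_, hb2'.conj ha hsw, fun x => ?_⟩
      simp only [ind, Set.mem_ofPred_eq]
      split_ifs with hx <;> omega
    · have hex : ∃ j', (j' ∈ J ∧ j' + 2 ≤ j + c) ∧ ∀ i ∈ J, j' < i → j + c ≤ i + 1 := by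
        obtain ⟨j₁, hj₁, h6, h7⟩ := T.gap j hj (by omega)
        refine ⟨Nat.findGreatest (fun i => i ∈ J ∧ i + 2 ≤ j + c) (j + c),
          Nat.findGreatest_spec (P := fun i => i ∈ J ∧ i + 2 ≤ j + c) (by omega : j₁ ≤ j + c)
            ⟨hj₁, h7⟩, fun i hi hlt => ?_⟩
        by_contra hcon
        exact Nat.findGreatest_is_greatest hlt (by omega) ⟨hi, by omega⟩
      obtain ⟨j', ⟨hj', hjc⟩, hgreedy⟩ := hex
      have hjj : j < j' := by
        obtain ⟨j₁, hj₁, h6, h7⟩ := T.gap j hj (by omega)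
        by_contra hcon
        have := hgreedy j₁ hj₁ (by omega)
        omega
      have hsj : s0 + c ≤ j' + 1 := h5 j' hj' hjj
      have hss : s j ≠ s j' := fun h => by
        have := T.ts j hj; rw [h, T.ts j' hj'] at this; omega
      -- The holes gather between `j` and `j + c - 2` and at the side vertex `s j'`.
      obtain ⟨b, hb1, hb2, hb3, hb4⟩ := relocate (c := c)
        (S' := insert (s j') (seg v j (j + c - 1)))
        (T.conn_insert (m := s0) (n := j + c - 1) hj' (by omega) (by omega) (by omega)) ha hS
        (by
          intro x hx
          rw [Finset.mem_coe, mem_seg] at hx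
          rw [Finset.mem_coe, Finset.mem_insert, mem_seg]
          obtain ⟨t, _, _, ht⟩ := hx
          exact Or.inr ⟨t, by omega, by omega, ht⟩)
        (by
          intro x hx
          rw [Finset.mem_coe, Finset.mem_insert, mem_seg] at hx ⊢
          refine hx.imp_right ?_
          rintro ⟨t, _, _, ht⟩
          exact ⟨t, by omega, by omega, ht⟩)
        (by rw [T.card_seg (by omega)]; omega)
        (by rw [T.card_insert hj' (by omega)]; omega)
      have hbp : b p = s j := by
        rw [hb4 p, hp]
        rw [hp, Finset.mem_coe, Finset.mem_insert]
        rintro (h | h)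
        · exact hss h
        · exact T.s_notMem hj (by omega) h
      have hbq : b q = v D := by
        rw [hb4 q, hq]
        rw [hq, Finset.mem_coe, Finset.mem_insert]
        rintro (h | h)
        · exact T.ne j' hj' D le_rfl h.symm
        · exact T.v_notMem (by omega) h
      have hpq : q ≠ p := by
        rintro rfl
        exact T.ne j hj D le_rfl (hbp.symm.trans hbq)
      set B : Set V := {x | s0 ≤ τ x ∧ τ x < j + c} with hB
      have hvB : ∀ t, s0 ≤ t → t < j + c → v t ∈ B := fun t ht ht' => by
        simp only [hB, Set.mem_ofPred_eq]; rw [T.tv t (by omega)]; omega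
      have hsB : s j ∈ B := by simp only [hB, Set.mem_ofPred_eq]; rw [T.ts j hj]; omega
      have hsB' : s j' ∈ B := by simp only [hB, Set.mem_ofPred_eq]; rw [T.ts j' hj']; omega
      have hseg : ∀ t, j ≤ t → t + 1 < j + c → v t ∉ Set.range b := fun t ht ht' => by
        rw [← hb3, Finset.mem_insert, mem_seg]; exact Or.inr ⟨t, ht, by omega, rfl⟩
      have hadv := T.advance hb1 hj hj' hjj hbp (fun t ht ht' => hseg t ht (by omega))
        (by rw [← hb3]; exact Finset.mem_insert_self _ _) B
        (fun t ht ht' => hvB t (by omega) (by omega)) hsB hsB'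
      set d := update b p (s j') with hd
      have hd1 := hadv.injective hb1
      have hd3 : Holes d (insert (s j) (seg v j (j + c - 1))) := by
        intro u
        have e1 : u ∈ Set.range b ↔ ¬ (u = s j' ∨ u ∈ seg v j (j + c - 1)) := by
          rw [← Finset.mem_insert, hb3, not_not]
        rw [hd, mem_range_update hb1, hbp, e1, Finset.mem_insert]
        have e2 : s j' ∉ seg v j (j + c - 1) := T.s_notMem hj' (by omega)
        have e3 : s j ∉ seg v j (j + c - 1) := T.s_notMem hj (by omega)
        by_cases u1 : u = s j'
        · subst u1; simp [e2, Ne.symm hss]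
        · by_cases u2 : u = s j
          · subst u2; simp [hss]
          · simp [u1, u2]
      have hdp : d p = s j' := by simp [hd]
      have hdq : d q = v D := by rw [hd, update_of_ne hpq, hbq]
      -- The hole left behind at `s j` returns to the track.
      obtain ⟨e, he1, he2, he3, he4⟩ := relocate (c := c) (S' := seg v j (j + c))
        (T.conn_insert (m := j) (n := j + c) hj (by omega) (by omega) (by omega)) hd1 hd3
        (by
          intro x hx
          rw [Finset.mem_coe, Finset.mem_insert, mem_seg] at hx ⊢
          refine hx.imp_right ?_
          rintro ⟨t, _, _, ht⟩
          exact ⟨t, by omega, by omega, ht⟩)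
        (by
          intro x hx
          rw [Finset.mem_coe] at hx ⊢
          exact Finset.mem_insert_of_mem hx)
        (by rw [T.card_insert hj (by omega)]; omega)
        (by rw [T.card_seg (by omega)]; omega)
      have hep : e p = s j' := by
        rw [he4 p, hdp]
        rw [hdp, Finset.mem_coe, Finset.mem_insert]
        rintro (h | h)
        · exact hss h.symm
        · exact T.s_notMem hj' (by omega) h
      have heq : e q = v D := by
        rw [he4 q, hdq]
        rw [hdq, Finset.mem_coe, Finset.mem_insert]
        rintro (h | h)
        · exact T.ne j hj D le_rfl h.symm
        · exact T.v_notMem (by omega) h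
      have hjD' := T.J_lt j' hj'
      obtain ⟨k, hk1, hk2⟩ := ih j j' e (by omega) he1 hj' hjj (by omega) (by omega) hgreedy hep
        heq he3
      have hb2' : Plan G a b (ind B (2 * c)) := hb2.mono_ind (by
        intro x hx
        rw [Finset.mem_coe, Finset.mem_insert, mem_seg] at hx
        rcases hx with rfl | ⟨t, _, _, rfl⟩
        · exact hsB'
        · exact hvB t (by omega) (by omega))
      have he2' : Plan G d e (ind B (2 * c)) := he2.mono_ind (by
        intro x hx
        rw [Finset.mem_coe, Finset.mem_insert, mem_seg] at hx
        rcases hx with rfl | ⟨t, _, _, rfl⟩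
        · exact hsB
        · exact hvB t (by omega) (by omega))
      have hae : Plan G a e (ind B (4 * c + 6)) :=
        (hb2'.add_ind hadv (l := 2 * c + 6)).add_ind he2'
      refine ⟨_, hae.conj ha hk1, fun x => ?_⟩
      obtain ⟨k1, k2, k3, k4, k5⟩ := hk2 x
      have hi1 : τ x < s0 ∨ j + c ≤ τ x → ind B (4 * c + 6) x = 0 := by
        intro hx; unfold ind; rw [if_neg]; simp only [hB, Set.mem_ofPred_eq]; omega
      have hi2 : ind B (4 * c + 6) x ≤ 4 * c + 6 := by
        unfold ind; split_ifs <;> omega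
      refine ⟨fun hx => ?_, fun hx => ?_, fun hx => ?_, fun hx => ?_, ?_⟩
      · rw [hi1 (Or.inl hx), k1 (by omega)]
      · rw [k1 (by omega)]; omega
      · have := k2 hx; omega
      · have := k3 (by omega); omega
      · by_cases hx : τ x < j + c
        · have := k4 hx; omega
        · rw [hi1 (Or.inr (by omega))]; omega

end Track

/-! ### Paths and corridors in a tree -/

lemma IsPath_getVert_inj {x z : V} {r : G.Walk x z} (hr : r.IsPath) {i j : ℕ} (hi : i ≤ r.length)
    (hj : j ≤ r.length) (h : r.getVert i = r.getVert j) : i = j :=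
  hr.getVert_injOn hi hj h

lemma path_eq (hG : G.IsAcyclic) {x z : V} {p q : G.Walk x z} (hp : p.IsPath) (hq : q.IsPath) :
    p = q :=
  congrArg Subtype.val ((hG.subsingleton_path x z).elim ⟨p, hp⟩ ⟨q, hq⟩)

lemma subpath {x z : V} {r : G.Walk x z} (hr : r.IsPath) {i j : ℕ} (hij : i ≤ j)
    (hj : j ≤ r.length) :
    ∃ q : G.Walk (r.getVert i) (r.getVert j), q.IsPath ∧ q.length = j - i ∧
      ∀ t ≤ j - i, q.getVert t = r.getVert (i + t) := by
  have e : (r.drop i).getVert (j - i) = r.getVert j := by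
    rw [SimpleGraph.Walk.drop_getVert]; congr 1; omega
  refine ⟨((r.drop i).take (j - i)).copy rfl e, ?_, ?_, ?_⟩
  · simpa using (hr.drop i).take (j - i)
  · simp [SimpleGraph.Walk.take_length, SimpleGraph.Walk.drop_length]; omega
  · intro t ht
    simp [SimpleGraph.Walk.take_getVert, SimpleGraph.Walk.drop_getVert, ht]

lemma path_adj (hG : G.IsAcyclic) {x z : V} {r : G.Walk x z} (hr : r.IsPath) {i j : ℕ}
    (hij : i < j) (hj : j ≤ r.length) (h : G.Adj (r.getVert i) (r.getVert j)) : j = i + 1 := by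
  obtain ⟨q, hq, hl, -⟩ := subpath hr hij.le hj
  rw [path_eq hG hq (SimpleGraph.Path.singleton h).2] at hl
  simp at hl
  omega

lemma path_side (hG : G.IsAcyclic) {x z : V} {r : G.Walk x z} (hr : r.IsPath) {i j : ℕ}
    (hij : i < j) (hj : j ≤ r.length) {u : V} (hu : u ∉ r.support)
    (h1 : G.Adj u (r.getVert i)) (h2 : G.Adj u (r.getVert j)) : False := by
  obtain ⟨q, hq, hl, hv⟩ := subpath hr hij.le hj
  have hm : ∀ t, r.getVert t ∈ r.support := fun t => r.getVert_mem_support t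
  have hne : r.getVert i ≠ r.getVert j := fun h => by
    have := IsPath_getVert_inj hr (by omega) hj h; omega
  let q' : G.Walk (r.getVert i) (r.getVert j) := .cons h1.symm (.cons h2 .nil)
  have hq' : q'.IsPath := by
    simp only [q', SimpleGraph.Walk.cons_isPath_iff, SimpleGraph.Walk.support_cons,
      SimpleGraph.Walk.support_nil]
    have := h1.ne'; have := h2.ne
    simp [*]
  have he : q = q' := path_eq hG hq hq'
  have hl' : j - i = 2 := by rw [← hl, he]; rfl
  have := hv 1 (by omega)
  rw [he] at this
  exact hu (by rw [show u = q'.getVert 1 from rfl, this]; exact hm _)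

/-- A neighbour of a path vertex is one of the two adjacent path vertices, or lies off the path. -/
lemma nbr_on_path (hG : G.IsAcyclic) {x z : V} {r : G.Walk x z} (hr : r.IsPath) {i : ℕ}
    (hi : i ≤ r.length) {u : V} (h : G.Adj (r.getVert i) u) (hu : u ∈ r.support) :
    (0 < i ∧ u = r.getVert (i - 1)) ∨ (i < r.length ∧ u = r.getVert (i + 1)) := by
  obtain ⟨j, rfl, hj⟩ := SimpleGraph.Walk.mem_support_iff_exists_getVert.1 hu
  rcases lt_trichotomy i j with h1 | rfl | h1
  · have := path_adj hG hr h1 hj h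
    subst this
    exact Or.inr ⟨by omega, rfl⟩
  · exact absurd rfl h.ne
  · have := path_adj hG hr h1 hi h.symm
    subst this
    exact Or.inl ⟨by omega, by simp⟩

lemma interior_iff {x z : V} {r : G.Walk x z} (hr : r.IsPath) {d : ℕ} :
    (∀ t, 0 < t → t < r.length → PMT.deg G (r.getVert t) = d) ↔
      ∀ u ∈ r.support, u ≠ x → u ≠ z → PMT.deg G u = d := by
  constructor
  · intro h u hu h1 h2
    obtain ⟨t, rfl, ht⟩ := SimpleGraph.Walk.mem_support_iff_exists_getVert.1 hu
    apply h
    · rcases Nat.eq_zero_or_pos t with rfl | h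
      · simp at h1
      · exact h
    · refine lt_of_le_of_ne ht ?_
      rintro rfl
      simp at h2
  · intro h t h1 h2
    apply h _ (r.getVert_mem_support t)
    · intro h3
      have := IsPath_getVert_inj hr (i := t) (j := 0) (by omega) (by omega) (by simpa using h3)
      omega
    · intro h3
      have := IsPath_getVert_inj hr (i := t) (j := r.length) (by omega) (by omega)
        (by simpa using h3)
      omega

lemma c1_le_cT : PMT.c1 G ≤ PMT.cT G := by
  unfold PMT.cT
  split_ifs
  · exact le_rfl
  · have := le_max_left (PMT.c1 G + 1) (PMT.c2 G + 2); omega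

/-- Beyond its first vertex, a path from `w` stays in one component of the complement of `w`. -/
lemma lnk_tail {w y : V} {r : G.Walk w y} (hr : r.IsPath) {u : V} (hu : u ∈ r.support)
    (huw : u ≠ w) : Lnk G {w}ᶜ u y := by
  obtain ⟨i, rfl, hi⟩ := SimpleGraph.Walk.mem_support_iff_exists_getVert.1 hu
  obtain ⟨q, -, hl, hv⟩ := subpath hr hi le_rfl
  have key : ∀ x ∈ q.support, x ≠ w := by
    intro x hx h
    obtain ⟨t, ht, htl⟩ := SimpleGraph.Walk.mem_support_iff_exists_getVert.1 hx
    rw [hv t (by omega), h] at ht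
    have := IsPath_getVert_inj hr (i := i + t) (j := 0) (by omega) (by omega) (by simpa using ht)
    have : i = 0 := by omega
    subst this
    simp at huw
  exact ⟨q.copy rfl (by simp), fun x hx => key x (by simpa using hx)⟩

section Corridors

variable [Fintype V]

/-- An interior path vertex of degree greater than two has a neighbour off the path. -/
lemma exists_side (hG : G.IsAcyclic) {x z : V} {r : G.Walk x z} (hr : r.IsPath) {i : ℕ}
    (hi : i ≤ r.length) (hd : 2 < PMT.deg G (r.getVert i)) :
    ∃ u, G.Adj (r.getVert i) u ∧ u ∉ r.support := by
  by_contra! hcon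
  have hsub : G.neighborSet (r.getVert i) ⊆ {r.getVert (i - 1), r.getVert (i + 1)} := by
    intro u hu
    rcases nbr_on_path hG hr hi hu (hcon u hu) with h | h
    · exact Or.inl h.2
    · exact Or.inr h.2
  have h1 := Set.ncard_le_ncard hsub (Set.toFinite _)
  have h2 := Set.ncard_insert_le (r.getVert (i - 1)) {r.getVert (i + 1)}
  rw [Set.ncard_singleton] at h2
  unfold PMT.deg at hd
  omega

lemma two_le_deg {x z : V} {r : G.Walk x z} (hr : r.IsPath) {i : ℕ}
    (h0 : 0 < i) (hi : i < r.length) : 2 ≤ PMT.deg G (r.getVert i) := by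
  have hsub : {r.getVert (i - 1), r.getVert (i + 1)} ⊆ G.neighborSet (r.getVert i) := by
    rintro u (rfl | rfl)
    · have := r.adj_getVert_succ (i := i - 1) (by omega)
      rw [show i - 1 + 1 = i by omega] at this
      exact this.symm
    · exact r.adj_getVert_succ hi
  have h1 := Set.ncard_le_ncard hsub (Set.toFinite _)
  rw [Set.ncard_pair] at h1
  · exact h1
  · intro h
    have := IsPath_getVert_inj hr (by omega) (by omega) h
    omega

/-- A path which cannot be prolonged within degree-two vertices is a corridor; hence any path all
of whose interior vertices have degree two is at most as long as the longest corridor. -/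
lemma le_c1 (hG : G.IsAcyclic) (n : ℕ) : ∀ {x z : V} (r : G.Walk x z), r.IsPath → 1 ≤ r.length →
    (∀ u ∈ r.support, u ≠ x → u ≠ z → PMT.deg G u = 2) →
    Fintype.card V ≤ r.length + n → r.length ≤ PMT.c1 G := by
  induction n with
  | zero => intro x z r hr _ _ h; have := hr.length_lt; omega
  | succ n ih =>
    have ext : ∀ {x z : V} (r : G.Walk x z), r.IsPath → 1 ≤ r.length →
        (∀ u ∈ r.support, u ≠ x → u ≠ z → PMT.deg G u = 2) →
        Fintype.card V ≤ r.length + (n + 1) → PMT.deg G x = 2 → r.length ≤ PMT.c1 G := by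
      intro x z r hr hl hdeg hc hx
      obtain ⟨a, b, hab, hN⟩ := Set.ncard_eq_two.1 hx
      have key : ∃ u, G.Adj x u ∧ u ≠ r.getVert 1 := by
        by_cases ha : a = r.getVert 1
        · exact ⟨b, (hN ▸ (by simp) : b ∈ G.neighborSet x), by rw [← ha]; exact hab.symm⟩
        · exact ⟨a, (hN ▸ (by simp) : a ∈ G.neighborSet x), ha⟩
      obtain ⟨u, hu, hu1⟩ := key
      have hus : u ∉ r.support := by
        intro h
        rcases nbr_on_path hG hr (i := 0) (by omega) (by simpa using hu) h with h | h
        · omega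
        · exact hu1 h.2
      have := ih (.cons hu.symm r) (by simp [SimpleGraph.Walk.cons_isPath_iff, hr, hus])
        (by simp) (by
          intro y hy h1 h2
          simp only [SimpleGraph.Walk.support_cons, List.mem_cons] at hy
          by_cases hyx : y = x
          · rw [hyx, hx]
          · exact hdeg y (hy.resolve_left h1) hyx h2)
        (by simp; omega)
      simp at this
      omega
    intro x z r hr hl hdeg hc
    by_cases hx : PMT.deg G x = 2
    · exact ext r hr hl hdeg hc hx
    by_cases hz : PMT.deg G z = 2
    · have := ext r.reverse hr.reverse (by simpa using hl)
        (by intro u hu h1 h2; exact hdeg u (by simpa using hu) h2 h1) (by simpa using hc) hz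
      simpa using this
    · refine le_csSup ⟨Fintype.card V, ?_⟩ ⟨x, z, r, ⟨hr, hl, hx, hz, hdeg⟩, rfl⟩
      rintro m ⟨a, b, p, hp, rfl⟩
      exact hp.1.length_lt.le

lemma le_c2 {x z : V} (r : G.Walk x z) (hr : r.IsPath) (hl : 1 ≤ r.length)
    (hdeg : ∀ u ∈ r.support, u ≠ x → u ≠ z → PMT.deg G u = 2)
    (hx : 2 < PMT.deg G x) (hz : 2 < PMT.deg G z) : r.length ≤ PMT.c2 G := by
  refine le_csSup ⟨Fintype.card V, ?_⟩
    ⟨x, z, r, ⟨hr, hl, by omega, by omega, hdeg⟩, hx, hz, rfl⟩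
  rintro m ⟨a, b, p, hp, -, -, rfl⟩
  exact hp.1.length_lt.le

/-- A stretch of a path whose interior contains no junction has length at most `c₁`, and at most
`c₂` if both of its ends are junctions. -/
lemma stretch (hG : G.IsAcyclic) {x z : V} {r : G.Walk x z} (hr : r.IsPath) {i j : ℕ}
    (hij : i < j) (hj : j ≤ r.length)
    (hdeg : ∀ t, i < t → t < j → PMT.deg G (r.getVert t) ≤ 2) :
    j - i ≤ PMT.c1 G ∧
      (2 < PMT.deg G (r.getVert i) → 2 < PMT.deg G (r.getVert j) → j - i ≤ PMT.c2 G) := by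
  obtain ⟨q, hq, hl, hv⟩ := subpath hr hij.le hj
  have hdeg' := (interior_iff hq (d := 2)).1 (by
    intro t h1 h2
    rw [hv t (by omega)]
    have := hdeg (i + t) (by omega) (by omega)
    have := two_le_deg hr (i := i + t) (by omega) (by omega)
    omega)
  have h1 := le_c1 hG (Fintype.card V) q hq (by omega) hdeg' (by omega)
  refine ⟨by omega, fun h2 h3 => ?_⟩
  have := le_c2 q hq (by omega) hdeg' h2 h3
  omega

lemma one_le_c1 (hG : G.IsAcyclic) {x y : V} (h : G.Adj x y) : 1 ≤ PMT.c1 G := by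
  have := le_c1 hG (Fintype.card V) h.toWalk (SimpleGraph.Path.singleton h).2 (by simp)
    (by intro u hu h1 h2; simp at hu; tauto) (by omega)
  simpa using this

/-- A tree without junctions is a single path, so it has few vertices compared with `c₁`. -/
lemma card_le_of_no_junction (hG : G.IsTree) (hd : ∀ v, PMT.deg G v ≤ 2) :
    Fintype.card V ≤ PMT.c1 G + 1 := by
  have hne := hG.connected.nonempty
  have hac := hG.isAcyclic
  let L : Set ℕ := {n | ∃ (x z : V) (r : G.Walk x z), r.IsPath ∧ r.length = n}
  have hL : L.Nonempty := ⟨0, hne.some, hne.some, .nil, by simp, rfl⟩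
  have hb : BddAbove L := ⟨Fintype.card V, by
    rintro m ⟨a, b, p, hp, rfl⟩; exact hp.length_lt.le⟩
  obtain ⟨x, z, r, hr, hl⟩ := Nat.sSup_mem hL hb
  have hmax : ∀ {x' z' : V} (r' : G.Walk x' z'), r'.IsPath → r'.length ≤ r.length := by
    intro x' z' r' hr'
    rw [hl]
    exact le_csSup hb ⟨x', z', r', hr', rfl⟩
  have hcov : ∀ y, y ∈ r.support := by
    intro y
    by_contra hy
    obtain ⟨p⟩ := hG.connected.preconnected x y
    obtain ⟨d, -, hd1, hd2⟩ := p.exists_boundary_dart {u | u ∈ r.support} (by simp) hy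
    simp only [Set.mem_ofPred_eq] at hd1 hd2
    obtain ⟨i, hi, hil⟩ := SimpleGraph.Walk.mem_support_iff_exists_getVert.1 hd1
    have hadj := d.adj
    rw [← hi] at hadj
    rcases Nat.eq_zero_or_pos i with rfl | hi0
    · rw [r.getVert_zero] at hadj
      have := hmax (.cons hadj.symm r) (by simp [SimpleGraph.Walk.cons_isPath_iff, hr, hd2])
      simp at this
    rcases hil.eq_or_lt with rfl | hil
    · rw [r.getVert_length] at hadj
      have := hmax (r.concat hadj) (hr.concat hd2 hadj)
      simp at this
    have hsub : {d.snd, r.getVert (i - 1), r.getVert (i + 1)} ⊆ G.neighborSet (r.getVert i) := by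
      rintro u (rfl | rfl | rfl)
      · exact hadj
      · have := r.adj_getVert_succ (i := i - 1) (by omega)
        rw [show i - 1 + 1 = i by omega] at this
        exact this.symm
      · exact r.adj_getVert_succ hil
    have h1 := Set.ncard_le_ncard hsub (Set.toFinite _)
    rw [Set.ncard_insert_of_notMem, Set.ncard_pair] at h1
    · have := hd (r.getVert i); unfold PMT.deg at this; omega
    · intro h
      have := IsPath_getVert_inj hr (by omega) (by omega) h
      omega
    · rintro (h | h) <;> exact hd2 (h ▸ r.getVert_mem_support _)
  have hcard : Fintype.card V ≤ r.length + 1 := by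
    rw [← SimpleGraph.Walk.length_support, ← Finset.card_univ]
    refine (Finset.card_le_card (fun y _ => ?_)).trans (List.toFinset_card_le r.support)
    simpa using hcov y
  rcases Nat.eq_zero_or_pos r.length with h0 | h0
  · omega
  · have := (stretch hac hr (i := 0) (j := r.length) h0 le_rfl fun t _ _ => hd _).1
    omega

lemma cT_of_junction (hG : G.IsAcyclic) {w : V} (hw : 2 < PMT.deg G w) :
    PMT.c1 G + 1 ≤ PMT.cT G ∧ PMT.c2 G + 2 ≤ PMT.cT G := by
  have h : ¬ PMT.IsPathGraph G := by
    rintro ⟨a, b, p, hp, hcov⟩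
    obtain ⟨i, rfl, hi⟩ := SimpleGraph.Walk.mem_support_iff_exists_getVert.1 (hcov w)
    obtain ⟨u, -, hu⟩ := exists_side hG hp hi hw
    exact hu (hcov u)
  unfold PMT.cT
  rw [if_neg h]
  exact ⟨le_max_left _ _, le_max_right _ _⟩

/-- Every path of a tree carries a track, with a side vertex at each of its interior junctions. -/
lemma exists_track (hG : G.IsAcyclic) {c : ℕ} (h1 : PMT.c1 G + 1 ≤ c) (h2 : PMT.c2 G + 2 ≤ c)
    {x z : V} {r : G.Walk x z} (hr : r.IsPath) :
    ∃ s τ, Track G c r.length r.getVert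
      {j | 0 < j ∧ j < r.length ∧ 2 < PMT.deg G (r.getVert j)} s τ := by
  have hs : ∀ j, ∃ u, (j ≤ r.length ∧ 2 < PMT.deg G (r.getVert j)) →
      G.Adj (r.getVert j) u ∧ u ∉ r.support := by
    intro j
    by_cases hj : j ≤ r.length ∧ 2 < PMT.deg G (r.getVert j)
    · obtain ⟨u, hu⟩ := exists_side hG hr hj.1 hj.2
      exact ⟨u, fun _ => hu⟩
    · exact ⟨x, fun h => absurd h hj⟩
  choose s hs using hs
  have hτ : ∀ y, ∃ t, ∀ i ≤ r.length, (r.getVert i = y ∨ (y ∉ r.support ∧ G.Adj y (r.getVert i))) →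
      t = i := by
    intro y
    by_cases hy : ∃ i ≤ r.length, r.getVert i = y ∨ (y ∉ r.support ∧ G.Adj y (r.getVert i))
    · obtain ⟨i, hi, h⟩ := hy
      refine ⟨i, fun j hj h' => ?_⟩
      rcases h with rfl | ⟨h, ha⟩
      · rcases h' with h' | ⟨h', -⟩
        · exact IsPath_getVert_inj hr hi hj h'.symm
        · exact absurd (r.getVert_mem_support i) h'
      · rcases h' with rfl | ⟨h', ha'⟩
        · exact absurd (r.getVert_mem_support j) h
        · rcases lt_trichotomy i j with hij | hij | hij
          · exact (path_side hG hr hij hj h ha ha').elim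
          · exact hij
          · exact (path_side hG hr hij hi h ha' ha).elim
    · exact ⟨0, fun i hi h => absurd ⟨i, hi, h⟩ hy⟩
  choose τ hτ using hτ
  refine ⟨s, τ, fun i hi => r.adj_getVert_succ hi, fun i hi => hτ _ i hi (Or.inl rfl),
    fun j hj => hj.1, fun j hj => hj.2.1, fun j hj => (hs j ⟨hj.2.1.le, hj.2.2⟩).1,
    fun j hj => ?_, fun j hj i hi h => ?_, fun hc => ?_, fun j hj hc => ?_⟩
  · have := hs j ⟨hj.2.1.le, hj.2.2⟩
    exact hτ _ j hj.2.1.le (Or.inr ⟨this.2, this.1.symm⟩)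
  · exact (hs j ⟨hj.2.1.le, hj.2.2⟩).2 (h ▸ r.getVert_mem_support i)
  · by_contra! hcon
    have := (stretch hG hr (i := 0) (j := c) (by omega) hc fun t h3 h4 => by
      by_contra! h5
      have := hcon t ⟨h3, by omega, h5⟩
      omega).1
    omega
  · by_contra! hcon
    have hdeg : ∀ t, j < t → t + 2 ≤ j + c → PMT.deg G (r.getVert t) ≤ 2 := by
      intro t h3 h4
      by_contra! h5
      have := hcon t ⟨by omega, by omega, h5⟩ h3
      omega
    by_cases h6 : 2 < PMT.deg G (r.getVert (j + c - 1))
    · by_cases hc2 : c = 1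
      · omega
      have := (stretch hG hr (i := j) (j := j + c - 1) (by omega) (by omega) fun t h3 h4 =>
        hdeg t h3 (by omega)).2 hj.2.2 h6
      omega
    · have := (stretch hG hr (i := j) (j := j + c) (by omega) hc fun t h3 h4 => by
        by_cases h7 : t + 2 ≤ j + c
        · exact hdeg t h3 h7
        · rw [show t = j + c - 1 by omega]; omega).1
      omega

/-- A region around a junction `w` can be grown vertex by vertex while keeping two vertices outside
it that are separated by `w`. -/
lemma exists_region (hG : G.IsTree) {w : V} (hw : 2 ≤ PMT.deg G w) (m : ℕ) :
    m + 3 ≤ Fintype.card V → ∃ (S : Finset V) (a b : V), S.card = m + 1 ∧ w ∈ S ∧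
      (∀ h ∈ S, Lnk G (↑S : Set V) w h) ∧ a ∉ S ∧ b ∉ S ∧ ¬ Lnk G {w}ᶜ a b := by
  have hac := hG.isAcyclic
  induction m with
  | zero =>
    intro _
    obtain ⟨N, hN, hN2⟩ := Set.exists_subset_card_eq hw
    obtain ⟨a, b, hab, rfl⟩ := Set.ncard_eq_two.1 hN2
    have ha : G.Adj w a := hN (by simp)
    have hb : G.Adj w b := hN (by simp)
    refine ⟨{w}, a, b, by simp, by simp, ?_, by simpa using ha.ne', by simpa using hb.ne', ?_⟩
    · intro h hh
      rw [Finset.mem_singleton] at hh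
      subst hh
      exact Lnk.refl (by simp)
    · rintro ⟨p, hp⟩
      let q : G.Walk a b := .cons ha.symm (.cons hb .nil)
      have hq : q.IsPath := by
        simp only [q, SimpleGraph.Walk.cons_isPath_iff, SimpleGraph.Walk.support_cons,
          SimpleGraph.Walk.support_nil]
        have := ha.ne'; have := hb.ne
        simp [*]
      have he : p.bypass = q := path_eq hac p.bypass_isPath hq
      have : w ∈ p.bypass.support := by rw [he]; simp [q]
      exact hp w (p.support_bypass_subset_support this) rfl
  | succ m ih =>
    intro hm
    obtain ⟨S, a, b, h1, h2, h3, h4, h5, h6⟩ := ih (by omega)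
    have hex : ∃ y, y ∉ insert a (insert b S) := by
      by_contra! hcon
      have := Finset.card_le_card (fun y _ => hcon y : (Finset.univ : Finset V) ⊆ _)
      have h7 := Finset.card_insert_le a (insert b S)
      have h8 := Finset.card_insert_le b S
      rw [Finset.card_univ] at this
      omega
    obtain ⟨y, hy⟩ := hex
    simp only [Finset.mem_insert, not_or] at hy
    obtain ⟨p⟩ := hG.connected.preconnected w y
    obtain ⟨d, hd0, hd1, hd2⟩ := p.bypass.exists_boundary_dart (↑S : Set V) h2 hy.2.2
    have hadj := d.adj
    have hy' : Lnk G {w}ᶜ d.snd y :=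
      lnk_tail p.bypass_isPath (p.bypass.dart_snd_mem_support_of_mem_darts hd0)
        (fun h => hd2 (h ▸ h2))
    generalize d.snd = u at *
    rw [Finset.mem_coe] at hd2
    have hc : (insert u S).card = m + 1 + 1 := by rw [Finset.card_insert_of_notMem hd2, h1]
    have hw' : w ∈ insert u S := Finset.mem_insert_of_mem h2
    have hl : ∀ h ∈ insert u S, Lnk G (↑(insert u S) : Set V) w h := by
      have hmono : (↑S : Set V) ⊆ ↑(insert u S) := by simp
      intro h hh
      rcases Finset.mem_insert.1 hh with rfl | hh
      · exact ((h3 _ hd1).mono hmono).trans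
          (Lnk.adj hadj (hmono hd1) (by simp))
      · exact (h3 h hh).mono hmono
    -- If the region swallows `a` or `b`, the vertex `y` replaces it.
    by_cases hua : u = a
    · subst hua
      have hub : b ≠ u := by
        rintro rfl
        exact h6 (Lnk.refl fun h => hd2 (h ▸ h2))
      exact ⟨insert u S, y, b, hc, hw', hl, by simp [hy.1, hy.2.2], by simp [hub, h5],
        fun h => h6 (hy'.trans h)⟩
    by_cases hub : u = b
    · subst hub
      exact ⟨insert u S, a, y, hc, hw', hl, by simp [h4, Ne.symm hua], by simp [hy.2.1, hy.2.2],
        fun h => h6 (h.trans hy'.symm)⟩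
    exact ⟨insert u S, a, b, hc, hw', hl, by simp [h4, Ne.symm hua],
      by simp [h5, Ne.symm hub], h6⟩

end Corridors

/-! ### Exchanging two pebbles, and arbitrary rearrangements -/

/-- With the holes gathered around a junction of the track, the pebble at the start of the track is
brought to the side vertex of index `j`, leaving a prescribed set of holes along the track. -/
lemma prepare {c D : ℕ} {v : ℕ → V} {J : Set ℕ} {s : ℕ → V} {τ : V → ℕ}
    (T : Track G c D v J s τ) {i j : ℕ} (hi : i ∈ J) (hj : j ∈ J) {S0 S' : Finset V}
    (hcard : S0.card = c) (hconn : ∀ h ∈ S0, Lnk G (↑S0 : Set V) (v i) h)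
    {a : Q → V} (ha : Injective a) (hS : Holes a S0) {p q : Q} (hp : a p = v 0) (hq : a q = v D)
    (hS' : S' ⊆ S0 ∪ insert (s j) (seg v 1 D)) (hcard' : S'.card = c) (hs : s j ∈ S')
    (hv : ∀ t, 1 ≤ t → t ≤ j → v t ∈ S') :
    ∃ a1 : Q → V, Injective a1 ∧ Plan G a a1 (ind Set.univ (2 * c + 4)) ∧ a1 p = s j ∧
      a1 q = v D ∧ ∀ x, x ∉ Set.range a1 ↔ x ≠ s j ∧ (x ∈ S' ∨ x = v 0) := by
  have hi0 := T.J_pos i hi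
  have hiD := T.J_lt i hi
  have hj0 := T.J_pos j hj
  have hjD := T.J_lt j hj
  set R : Set V := ↑(S0 ∪ insert (s j) (seg v 1 D)) with hRdef
  have hR1 : (↑S0 : Set V) ⊆ R := by rw [hRdef]; exact_mod_cast Finset.subset_union_left
  have hR2 : ∀ t, 1 ≤ t → t < D → v t ∈ R := by
    intro t h1 h2
    rw [hRdef, Finset.mem_coe, Finset.mem_union, Finset.mem_insert, mem_seg]
    exact Or.inr (Or.inr ⟨t, h1, h2, rfl⟩)
  have hR3 : s j ∈ R := by simp [hRdef]
  have hlnk : ∀ t, 1 ≤ t → t < D → Lnk G R (v i) (v t) := fun t h1 h2 =>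
    T.lnk (m := 1) (n := D) (by omega) hR2 hi0 hiD h1 h2
  have hRc : Conn G R := by
    refine Conn.of_base (v i) fun x hx => ?_
    rw [hRdef, Finset.mem_coe, Finset.mem_union, Finset.mem_insert, mem_seg] at hx
    rcases hx with hx | rfl | ⟨t, h1, h2, rfl⟩
    · exact (hconn x hx).mono hR1
    · exact (hlnk j hj0 hjD).trans (.adj (T.adj_s j hj) (hR2 j hj0 hjD) hR3)
    · exact hlnk t h1 h2
  obtain ⟨b, hb1, hb2, hb3, hb4⟩ := relocate hRc ha hS hR1 (by rw [hRdef]; exact_mod_cast hS')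
    hcard hcard'
  have hend : ∀ r, ∀ t ≤ D, (t = 0 ∨ t = D) → a r = v t → a r ∉ R := by
    intro r t ht h0 hr h
    rw [hRdef, Finset.mem_coe, Finset.mem_union, Finset.mem_insert, mem_seg] at h
    rcases h with h | h | ⟨t', h1, h2, h⟩
    · exact (hS _).1 h ⟨r, rfl⟩
    · exact T.ne j hj t ht (h.symm.trans hr)
    · have := T.inj (by omega) ht (h.trans hr)
      omega
  have hbp : b p = v 0 := by rw [hb4 p (hend p 0 (by omega) (Or.inl rfl) hp), hp]
  have hbq : b q = v D := by rw [hb4 q (hend q D le_rfl (Or.inr rfl) hq), hq]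
  have hpq : q ≠ p := by
    rintro rfl
    have := T.inj (by omega) le_rfl (hbp.symm.trans hbq)
    omega
  have h1 : Plan G b (update b p (v j)) (ind Set.univ 2) :=
    T.forward (by omega) hjD.le hbp
      (fun t ht ht' => (hb3 _).1 (hv t ht ht')) _ fun _ _ _ => trivial
  have hsj : s j ∉ Set.range (update b p (v j)) := by
    rw [mem_range_update hb1]
    rintro (h | h)
    · exact T.ne j hj j hjD.le h
    · exact (hb3 _).1 hs h.1
  have h2 := Plan.one (G := G) (a := update b p (v j)) (q := p) (v := s j)
    (by simpa using T.adj_s j hj) hsj Set.univ trivial trivial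
  rw [update_idem] at h2
  refine ⟨update b p (s j), update_injective hb1 ((hb3 _).1 hs), ?_, by simp,
    by rw [update_of_ne hpq, hbq], fun x => ?_⟩
  · exact (hb2.mono_ind (Set.subset_univ R) le_rfl).add_ind (h1.add_ind h2 (l := 4))
  · rw [mem_range_update hb1, hbp, hb3]
    tauto

/-- If all exchanges of two pebbles are available, any permutation can be realised on the pebbles of
`P'`, one pebble at a time. -/
lemma perm_plan {a : Q → V} {L : ℕ}
    (hsw : ∀ p q, Plan G a (a ∘ Equiv.swap p q) (ind Set.univ L)) (σ : Equiv.Perm Q)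
    (P' : Finset Q) : ∃ ρ : Equiv.Perm Q, (∀ p ∈ P', ρ p = σ p) ∧
      Plan G a (a ∘ ρ) (ind Set.univ (P'.card * L)) := by
  induction P' using Finset.induction_on with
  | empty => exact ⟨1, by simp, .nil _ _⟩
  | insert q0 P' hq0 ih =>
    obtain ⟨ρ, h1, h2⟩ := ih
    refine ⟨Equiv.swap (ρ q0) (σ q0) * ρ, fun p hp => ?_, ?_⟩
    · rcases Finset.mem_insert.1 hp with rfl | hp'
      · simp
      · have hne : p ≠ q0 := by rintro rfl; exact hq0 hp'
        rw [Equiv.Perm.mul_apply, Equiv.swap_apply_of_ne_of_ne (fun h => hne (ρ.injective h)),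
          h1 p hp']
        rw [h1 p hp']
        exact fun h => hne (σ.injective h)
    · have h3 := (hsw (ρ q0) (σ q0)).permute ρ
      rw [Finset.card_insert_of_notMem hq0, add_mul, one_mul]
      exact h2.add_ind h3

section Exchange

variable [Fintype V]

/-- Two pebbles separated by the junction `w`, around which the holes are gathered, are
exchanged at cost `O(c)` per vertex. -/
lemma swap_separated (hG : G.IsTree) {c : ℕ} (h1 : PMT.c1 G + 1 ≤ c) (h2 : PMT.c2 G + 2 ≤ c)
    {w : V} (hw : 2 < PMT.deg G w) {S0 : Finset V} (hcard : S0.card = c) (hw0 : w ∈ S0)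
    (hconn : ∀ h ∈ S0, Lnk G (↑S0 : Set V) w h) {a : Q → V} (ha : Injective a)
    (hS : Holes a S0) {p q : Q} (hN : ¬ Lnk G {w}ᶜ (a p) (a q)) :
    Plan G a (a ∘ Equiv.swap p q) (ind Set.univ (64 * c)) := by
  have hac := hG.isAcyclic
  obtain ⟨r0⟩ := hG.connected.preconnected (a p) (a q)
  obtain ⟨r, hr⟩ : ∃ r : G.Walk (a p) (a q), r.IsPath := ⟨_, r0.bypass_isPath⟩
  have hwr : w ∈ r.support := by
    by_contra h
    exact hN ⟨r, fun u hu hu' => h (hu' ▸ hu)⟩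
  obtain ⟨s, τ, T⟩ := exists_track hac h1 h2 hr
  obtain ⟨i, hiw, hil⟩ := SimpleGraph.Walk.mem_support_iff_exists_getVert.1 hwr
  set D := r.length with hD
  set v := r.getVert with hv
  set J : Set ℕ := {j | 0 < j ∧ j < D ∧ 2 < PMT.deg G (v j)} with hJ
  have hp : a p = v 0 := r.getVert_zero.symm
  have hq : a q = v D := r.getVert_length.symm
  have hwa : ∀ x, a x ≠ w := fun x hx => (hS w).1 hw0 ⟨x, hx⟩
  have hi : i ∈ J := by
    refine ⟨Nat.pos_of_ne_zero ?_, lt_of_le_of_ne hil ?_, by rw [hiw]; exact hw⟩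
    · rintro rfl; exact hwa p (hp.trans hiw)
    · rintro rfl; exact hwa q (hq.trans hiw)
  subst hiw
  have hi0 := T.J_pos i hi
  have hiD := T.J_lt i hi
  rcases le_or_gt D c with hDc | hDc
  -- A short track is emptied altogether.
  · obtain ⟨S', h3, h4, h5⟩ := Finset.exists_subsuperset_card_eq (n := c)
      (Finset.subset_union_right : insert (s i) (seg v 1 D) ⊆ S0 ∪ insert (s i) (seg v 1 D))
      (by rw [T.card_insert hi (by omega)]; omega)
      (hcard.ge.trans (Finset.card_le_card Finset.subset_union_left))
    have hvS : ∀ t, 1 ≤ t → t < D → v t ∈ S' := fun t ht ht' =>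
      h3 (Finset.mem_insert_of_mem (mem_seg.2 ⟨t, ht, ht', rfl⟩))
    obtain ⟨a1, ha1, h6, h7, h8, h9⟩ := prepare T hi hi hcard hconn ha hS hp hq h4 h5
      (h3 (Finset.mem_insert_self _ _)) fun t ht ht' => hvS t ht (by omega)
    have h10 := T.exchange ha1 hi h7 h8 (fun t ht ht' => (h9 _).2 ⟨fun h =>
      T.ne i hi t ht'.le h.symm, by
        rcases Nat.eq_zero_or_pos t with rfl | h0
        · exact Or.inr rfl
        · exact Or.inl (hvS t h0 ht')⟩) Set.univ (fun _ _ _ => trivial) trivial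
    refine (h6.conj ha h10).mono fun x => ?_
    simp only [ind, Set.mem_univ, if_true]
    omega
  -- On a long track the exchange happens at its far end.
  · obtain ⟨j0, hj0, hj0c⟩ := T.gap0 hDc.le
    obtain ⟨j, ⟨hj, hjc⟩, hmax⟩ : ∃ j, (j ∈ J ∧ j < c) ∧ ∀ i, i ∈ J ∧ i < c → i ≤ j := by
      have := Nat.findGreatest_spec (P := fun j => j ∈ J ∧ j < c) (n := c) hj0c.le ⟨hj0, hj0c⟩
      exact ⟨_, this, fun i hi => Nat.le_findGreatest hi.2.le hi⟩
    have hcardS : (insert (s j) (seg v 1 c)).card = c := by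
      rw [T.card_insert hj (by omega)]; omega
    obtain ⟨a1, ha1, h6, h7, h8, h9⟩ := prepare T hi hj hcard hconn ha hS hp hq
      (S' := insert (s j) (seg v 1 c))
      ((Finset.insert_subset_insert _ (Finset.image_subset_image
        (Finset.Ico_subset_Ico_right hDc.le))).trans Finset.subset_union_right)
      hcardS (Finset.mem_insert_self _ _) fun t ht ht' =>
        Finset.mem_insert_of_mem (mem_seg.2 ⟨t, ht, by omega, rfl⟩)
    have hH : Holes a1 (seg v 0 (0 + c)) := by
      intro x
      rw [h9, mem_seg, Finset.mem_insert, mem_seg]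
      constructor
      · rintro ⟨t, -, ht, rfl⟩
        refine ⟨fun h => T.ne j hj t (by omega) h.symm, ?_⟩
        rcases Nat.eq_zero_or_pos t with rfl | h0
        · exact Or.inr rfl
        · exact Or.inl (Or.inr ⟨t, h0, by omega, rfl⟩)
      · rintro ⟨h, (h' | ⟨t, ht, ht', rfl⟩) | rfl⟩
        · exact absurd h' h
        · exact ⟨t, by omega, by omega, rfl⟩
        · exact ⟨0, le_rfl, by omega, rfl⟩
    obtain ⟨k, h10, h11⟩ := T.travel (by omega) p q D 0 j a1 (by omega) ha1 hj (T.J_pos j hj)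
      (by omega) (by omega) (fun i hi hji => by
        by_contra! h
        have := hmax i ⟨hi, by omega⟩
        omega) h7 h8 hH
    refine (h6.conj ha h10).mono fun x => ?_
    have := (h11 x).2.2.2.2
    simp only [ind, Set.mem_univ, if_true]
    omega

/-- Any two pebbles can be exchanged: if they are not separated by `w`, a third pebble separated
from both of them serves as an intermediary. -/
lemma swap_any (hG : G.IsTree) {c : ℕ} (h1 : PMT.c1 G + 1 ≤ c) (h2 : PMT.c2 G + 2 ≤ c)
    {w : V} (hw : 2 < PMT.deg G w) {S0 : Finset V} (hcard : S0.card = c) (hw0 : w ∈ S0)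
    (hconn : ∀ h ∈ S0, Lnk G (↑S0 : Set V) w h) {x y : V} (hx : x ∉ S0) (hy : y ∉ S0)
    (hxy : ¬ Lnk G {w}ᶜ x y) {a : Q → V} (ha : Injective a) (hS : Holes a S0) (p q : Q) :
    Plan G a (a ∘ Equiv.swap p q) (ind Set.univ (192 * c)) := by
  have key : ∀ p q, ¬ Lnk G {w}ᶜ (a p) (a q) →
      Plan G a (a ∘ Equiv.swap p q) (ind Set.univ (64 * c)) := fun p q h =>
    swap_separated hG h1 h2 hw hcard hw0 hconn ha hS h
  by_cases hN : Lnk G {w}ᶜ (a p) (a q)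
  · obtain ⟨rx, hrx⟩ : x ∈ Set.range a := by
      by_contra h; exact hx ((hS x).2 h)
    obtain ⟨ry, hry⟩ : y ∈ Set.range a := by
      by_contra h; exact hy ((hS y).2 h)
    obtain ⟨r, hr⟩ : ∃ r, ¬ Lnk G {w}ᶜ (a p) (a r) := by
      by_contra! h
      exact hxy (hrx ▸ hry ▸ (h rx).symm.trans (h ry))
    have hwa : ∀ x, a x ∈ ({w}ᶜ : Set V) := fun x hx => (hS w).1 hw0 ⟨x, hx⟩
    have hrp : r ≠ p := by rintro rfl; exact hr (Lnk.refl (hwa _))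
    have hrq : r ≠ q := by rintro rfl; exact hr hN
    by_cases hpq : p = q
    · subst hpq
      rw [Equiv.swap_self]
      exact .nil _ _
    have e1 := key p r hr
    have e2 := (key q r fun h => hr (hN.trans h)).permute (Equiv.swap p r)
    have e3 := e1.permute (Equiv.swap q r * Equiv.swap p r)
    have : a ∘ Equiv.swap p q =
        (a ∘ Equiv.swap p r) ∘ (Equiv.swap q r * Equiv.swap p r : Equiv.Perm Q) := by
      have : Equiv.swap p q = Equiv.swap p r * (Equiv.swap q r * Equiv.swap p r) := by
        rw [Equiv.swap_comm p r, ← mul_assoc,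
          Equiv.swap_mul_swap_mul_swap (Ne.symm hrq) (Ne.symm hpq)]
      rw [this]; rfl
    rw [this]
    exact (e1.add_ind e2 (l := 128 * c)).add_ind e3
  · exact (key p q hN).mono_ind subset_rfl

/-- The bound for placements with exactly `c(T)` holes and at least two pebbles, where only the
pebbles of a set `P'` have to reach their targets. -/
lemma abstract_bound [Fintype Q] (hG : G.IsTree)
    (hcard : Fintype.card V = Fintype.card Q + PMT.cT G) (hQ : 2 ≤ Fintype.card Q)
    {a b : Q → V} (ha : Injective a) (hb : Injective b) (P' : Finset Q) : ∃ b' : Q → V,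
      Plan G a b' (ind Set.univ (P'.card * (192 * PMT.cT G) + 4 * PMT.cT G)) ∧
      ∀ p ∈ P', b' p = b p := by
  obtain ⟨w, hw⟩ : ∃ w, 2 < PMT.deg G w := by
    by_contra! h
    have := card_le_of_no_junction hG h
    have := c1_le_cT (G := G)
    omega
  obtain ⟨h1, h2⟩ := cT_of_junction hG.isAcyclic hw
  set c := PMT.cT G with hc
  obtain ⟨S0, x, y, h3, h4, h5, h6, h7, h8⟩ := exists_region hG hw.le (c - 1) (by omega)
  have h3' : S0.card = c := by omega
  have huniv : Conn G (Set.univ : Set V) := fun u _ u' _ => by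
    obtain ⟨p⟩ := hG.connected.preconnected u u'
    exact ⟨p, fun _ _ => trivial⟩
  have gather : ∀ a : Q → V, Injective a → ∃ a1, Injective a1 ∧
      Plan G a a1 (ind Set.univ (2 * c)) ∧ Holes a1 S0 := by
    intro a ha
    obtain ⟨a1, h9, h10, h11, -⟩ := relocate huniv (S := Finset.univ \ Finset.univ.image a)
      (S' := S0) ha (fun u => by simp) (Set.subset_univ _) (Set.subset_univ _) (c := c)
      (by
        rw [Finset.card_sdiff_of_subset (Finset.subset_univ _), Finset.card_image_of_injective _ ha,
          Finset.card_univ, Finset.card_univ]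
        omega) h3'
    exact ⟨a1, h9, h10, h11⟩
  obtain ⟨a1, ha1, pa, Ha⟩ := gather a ha
  obtain ⟨b1, hb1, pb, Hb⟩ := gather b hb
  have hex : ∀ q, ∃ q', a1 q' = b1 q := by
    intro q
    by_contra h
    exact (Hb _).1 ((Ha (b1 q)).2 h) ⟨q, rfl⟩
  choose f hf using hex
  have hfi : Injective f := fun q q' h => hb1 (by rw [← hf, ← hf, h])
  let σ : Equiv.Perm Q := Equiv.ofBijective f (Finite.injective_iff_bijective.1 hfi)
  have hσ : b1 = a1 ∘ σ := funext fun q => (hf q).symm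
  obtain ⟨ρ, hρ, pρ⟩ := perm_plan (G := G)
    (fun p q => swap_any hG h1 h2 hw h3' h4 h5 h6 h7 h8 ha1 Ha p q) σ P'
  have pb' := (pb.symm hb).permute (σ⁻¹ * ρ)
  have e : b1 ∘ (σ⁻¹ * ρ : Equiv.Perm Q) = a1 ∘ ρ := by
    rw [hσ]; funext q; simp
  rw [e] at pb'
  refine ⟨b ∘ (σ⁻¹ * ρ : Equiv.Perm Q), ?_, fun p hp => ?_⟩
  · exact (pa.add_ind pρ (l := P'.card * (192 * c) + 2 * c)).add_ind pb'
  · simp [hρ p hp]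

end Exchange

/-! ### From placements to configurations -/

/-- A rearrangement of the pebbles `Q`, which may include holes regarded as pebbles, is realised by
a plan in the original sense. -/
lemma Plan.lift {P H : Type} {emb : Q → P ⊕ H} (hemb : Injective emb)
    (hright : ∀ o, o ∉ Set.range emb → o.isRight = true) {a b : Q → V} {k : V → ℕ}
    (h : Plan G a b k) : ∀ A : PMT.Config P H V, (∀ q, A (emb q) = a q) →
      ∃ (f : List (V × V)) (B : PMT.Config P H V), PMT.applyPlan G A f = some B ∧
        (∀ q, B (emb q) = b q) ∧ ∀ x, PMT.crossCount G A f x ≤ k x := by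
  induction h with
  | nil a k => exact fun A hA => ⟨[], A, rfl, hA, fun x => Nat.zero_le _⟩
  | cons a b k k' q v h1 h2 h3 h4 ih =>
    intro A hA
    have hv : (A.symm v).isRight = true := hright _ fun ⟨r, hr⟩ => h2 ⟨r, by rw [← hA, hr]; simp⟩
    have hm : PMT.applyMove G A (a q, v) = some (A.trans (Equiv.swap (a q) v)) := by
      unfold PMT.applyMove
      exact if_pos ⟨h1, hv⟩
    obtain ⟨f, B, h5, h6, h7⟩ := ih (A.trans (Equiv.swap (a q) v)) fun r => by
      rw [Equiv.trans_apply, hA]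
      by_cases hr : r = q
      · subst hr; simp
      · rw [update_of_ne hr, Equiv.swap_apply_of_ne_of_ne]
        · intro h; rw [← hA, ← hA] at h; exact hr (hemb (A.injective h))
        · intro h; exact h2 ⟨r, h⟩
    refine ⟨(a q, v) :: f, B, ?_, h6, fun x => ?_⟩
    · simp only [PMT.applyPlan, hm, Option.bind_some, h5]
    · have := h4 x
      have := h7 x
      simp only [PMT.crossCount, hm]
      by_cases hx : v = x
      · subst hx
        simp only [or_true, if_true] at *
        split_ifs <;> omega
      · simp only [hx, false_and, if_false]
        omega

variable [Fintype V]

/-- A single pebble walks to its target. -/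
lemma single_bound [Fintype Q] (hG : G.IsTree) (hQ : Fintype.card Q = 1) (a b : Q → V) :
    Plan G a b (ind Set.univ (2 * PMT.cT G)) := by
  obtain ⟨q, hq⟩ := Fintype.card_eq_one_iff.1 hQ
  obtain ⟨r0⟩ := hG.connected.preconnected (a q) (b q)
  obtain ⟨r, hr⟩ : ∃ r : G.Walk (a q) (b q), r.IsPath := ⟨_, r0.bypass_isPath⟩
  have hb : update a q (r.getVert r.length) = b := by
    funext x
    rw [hq x]; simp
  have hp : Plan G a (update a q (r.getVert r.length)) (ind Set.univ 2) :=
    Plan.run r.getVert r.length (by simp) (fun i hi => r.adj_getVert_succ hi)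
      (fun i hi j hj h => IsPath_getVert_inj hr hi hj h)
      (fun i h0 hi => by
        rintro ⟨x, hx⟩
        rw [hq x] at hx
        have := IsPath_getVert_inj hr (i := i) (j := 0) hi (by omega) (by simpa using hx.symm)
        omega) _ fun _ _ => trivial
  rw [hb] at hp
  rcases Nat.eq_zero_or_pos r.length with h0 | h0
  · have : a = b := by
      funext x
      rw [hq x]
      exact SimpleGraph.Walk.eq_of_length_eq_zero h0
    exact this ▸ .nil _ _
  · have h1 := one_le_c1 hG.isAcyclic (r.adj_getVert_succ h0)
    have h2 := c1_le_cT (G := G)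
    exact hp.mono_ind subset_rfl

lemma main_bound {P H : Type} [Fintype P] [Fintype H] (hG : G.IsTree)
    (hcard : Fintype.card V = Fintype.card P + Fintype.card H)
    (hc : PMT.cT G ≤ Fintype.card H) (As At : PMT.Config P H V) :
    ∃ (f : List (V × V)) (B : PMT.Config P H V), PMT.applyPlan G As f = some B ∧
      (∀ p : P, B (Sum.inl p) = At (Sum.inl p)) ∧
      ∀ v : V, PMT.crossCount G As f v ≤ 200 * Fintype.card P * PMT.cT G := by
  rcases lt_trichotomy (Fintype.card P) 1 with hP | hP | hP
  · have := Fintype.card_eq_zero_iff.1 (Nat.lt_one_iff.1 hP)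
    exact ⟨[], As, rfl, fun p => this.elim p, fun v => Nat.zero_le _⟩
  · obtain ⟨f, B, h1, h2, h3⟩ := (single_bound hG hP (fun p => As (Sum.inl p))
      fun p => At (Sum.inl p)).lift Sum.inl_injective
        (by rintro (p | h) ho
            · exact absurd ⟨p, rfl⟩ ho
            · rfl) As fun _ => rfl
    refine ⟨f, B, h1, h2, fun v => (h3 v).trans ?_⟩
    simp only [ind, Set.mem_univ, if_true, hP]
    omega
  -- All but `c(T)` of the holes are regarded as further pebbles, whose targets do not matter.
  · obtain ⟨K, -, hK⟩ := Finset.exists_subset_card_eq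
      (s := (Finset.univ : Finset H)) (n := PMT.cT G) (by simpa using hc)
    let emb : P ⊕ {h : H // h ∉ K} → P ⊕ H := Sum.map id Subtype.val
    have hemb : Injective emb := Injective.sumMap injective_id Subtype.val_injective
    have hcardQ : Fintype.card (P ⊕ {h : H // h ∉ K}) + PMT.cT G =
        Fintype.card P + Fintype.card H := by
      rw [Fintype.card_sum, Fintype.card_subtype_compl, Fintype.card_coe, hK]
      omega
    obtain ⟨b', h1, h2⟩ := abstract_bound (Q := P ⊕ {h : H // h ∉ K}) hG (by omega)
      (by rw [Fintype.card_sum]; omega) (As.injective.comp hemb) (At.injective.comp hemb)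
      (Finset.univ.image Sum.inl)
    obtain ⟨f, B, h3, h4, h5⟩ := h1.lift hemb
      (by rintro (p | h) ho
          · exact absurd ⟨Sum.inl p, rfl⟩ ho
          · rfl) As fun _ => rfl
    refine ⟨f, B, h3, fun p => (h4 (Sum.inl p)).trans (h2 _ (by simp)), fun v => (h5 v).trans ?_⟩
    simp only [ind, Set.mem_univ, if_true]
    rw [Finset.card_image_of_injective _ Sum.inl_injective, Finset.card_univ]
    have : 1 * PMT.cT G ≤ Fintype.card P * PMT.cT G := Nat.mul_le_mul_right _ hP.le
    nlinarith

end Plans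

/-- there is a universal constant `C` such that every pebble motion instance
on a tree (with `|H| ≥ c(T)`) admits a solution plan in which each vertex is crossed at
most `C·|P|·c(T)` times by the pebbles. -/
theorem crossing_bound :
    ∃ C : ℕ, 0 < C ∧
      ∀ (V P H : Type) [Fintype V] [Fintype P] [Fintype H] (G : SimpleGraph V),
        G.IsTree →
        Fintype.card V = Fintype.card P + Fintype.card H →
        PMT.cT G ≤ Fintype.card H →
        ∀ As At : PMT.Config P H V,
          ∃ (f : List (V × V)) (B : PMT.Config P H V),
            PMT.applyPlan G As f = some B ∧
            (∀ p : P, B (Sum.inl p) = At (Sum.inl p)) ∧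
            ∀ v : V, PMT.crossCount G As f v ≤ C * Fintype.card P * PMT.cT G := by
  exact ⟨200, by norm_num, fun V P H _ _ _ G hG h1 h2 As At => main_bound hG h1 h2 As At⟩
end
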